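/- arXiv:2408.02506 — 9 statements merged into one kernel-verified Lean document; each statement's English description precedes it below -/
import Mathlib

section
/- Choi characterization of the A-to-B non-signalling condition: let A₀, B₀, A₁, B₁ be finite nonempty types and N : Matrix ((A₀ × B₀)) ((A₀ × B₀)) ℂ →ₗ[ℂ] Matrix ((A₁ × B₁)) ((A₁ × B₁)) ℂ a ℂ-linear map with Choi matrix J^N. Then N is non-signalling from A to B (i.e. R_{A₁} ∘ N = R_{A₁} ∘ N ∘ R_{A₀}) if and only if, viewing J^N as indexed by A₀ × A₁ × B₀ × B₁, one has Tr_{A₁} J^N = π_{A₀} ⊗ Tr_{A₀ A₁} J^N (an identity of matrices indexed by A₀ × B₀ × B₁). -/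
open Matrix
open scoped ComplexOrder

noncomputable section

/-- Loewner order on complex matrices: `M ≤ N` iff `N - M` is positive semidefinite. -/
def LoewnerLE {n : Type*} [Fintype n] (M N : Matrix n n ℂ) : Prop := (N - M).PosSemidef

/-- `π_S ⊗ X`, the maximally mixed state on `S` tensored with `X`. -/
def piFst {S T : Type*} [Fintype S] [DecidableEq S] (X : Matrix T T ℂ) :
    Matrix (S × T) (S × T) ℂ :=
  fun x y => ((Fintype.card S : ℂ))⁻¹ * (if x.1 = y.1 then 1 else 0) * X x.2 y.2

/-- `I_S ⊗ X`, the identity on `S` tensored with `X`. -/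
def idFst {S T : Type*} [DecidableEq S] (X : Matrix T T ℂ) :
    Matrix (S × T) (S × T) ℂ :=
  fun x y => (if x.1 = y.1 then 1 else 0) * X x.2 y.2

/-- Partial trace over the second tensor factor. -/
def trOut {S T : Type*} [Fintype T] (X : Matrix (S × T) (S × T) ℂ) : Matrix S S ℂ :=
  fun s s' => ∑ t : T, X (s, t) (s', t)

/-- Partial trace over the first tensor factor. -/
def trInp {S T : Type*} [Fintype S] (X : Matrix (S × T) (S × T) ℂ) : Matrix T T ℂ :=
  fun t t' => ∑ s : S, X (s, t) (s, t')

section FourSystems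

variable {A₀ A₁ B₀ B₁ : Type*} [Fintype A₀] [Fintype A₁] [Fintype B₀] [Fintype B₁]
  [DecidableEq A₀] [DecidableEq A₁] [DecidableEq B₀] [DecidableEq B₁]

/-- `Tr_{A₁}` of a matrix on `A₀ × A₁ × B₀ × B₁`. -/
def trA1 (J : Matrix (A₀ × A₁ × B₀ × B₁) (A₀ × A₁ × B₀ × B₁) ℂ) :
    Matrix (A₀ × B₀ × B₁) (A₀ × B₀ × B₁) ℂ :=
  fun x y => ∑ a : A₁, J (x.1, a, x.2) (y.1, a, y.2)

/-- `Tr_{B₁}` of a matrix on `A₀ × A₁ × B₀ × B₁`. -/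
def trB1 (J : Matrix (A₀ × A₁ × B₀ × B₁) (A₀ × A₁ × B₀ × B₁) ℂ) :
    Matrix (A₀ × A₁ × B₀) (A₀ × A₁ × B₀) ℂ :=
  fun x y => ∑ b : B₁, J (x.1, x.2.1, x.2.2, b) (y.1, y.2.1, y.2.2, b)

/-- `Tr_{A₀A₁}` of a matrix on `A₀ × A₁ × B₀ × B₁`. -/
def trA0A1 (J : Matrix (A₀ × A₁ × B₀ × B₁) (A₀ × A₁ × B₀ × B₁) ℂ) :
    Matrix (B₀ × B₁) (B₀ × B₁) ℂ :=
  fun x y => ∑ a₀ : A₀, ∑ a₁ : A₁, J (a₀, a₁, x) (a₀, a₁, y)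

/-- `Tr_{B₀B₁}` of a matrix on `A₀ × A₁ × B₀ × B₁`. -/
def trB0B1 (J : Matrix (A₀ × A₁ × B₀ × B₁) (A₀ × A₁ × B₀ × B₁) ℂ) :
    Matrix (A₀ × A₁) (A₀ × A₁) ℂ :=
  fun x y => ∑ b₀ : B₀, ∑ b₁ : B₁, J (x.1, x.2, b₀, b₁) (y.1, y.2, b₀, b₁)

/-- `Tr_{A₁B₁}` of a matrix on `A₀ × A₁ × B₀ × B₁`. -/
def trA1B1 (J : Matrix (A₀ × A₁ × B₀ × B₁) (A₀ × A₁ × B₀ × B₁) ℂ) :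
    Matrix (A₀ × B₀) (A₀ × B₀) ℂ :=
  fun x y => ∑ a₁ : A₁, ∑ b₁ : B₁, J (x.1, a₁, x.2, b₁) (y.1, a₁, y.2, b₁)

/-- `π_{B₀} ⊗ Y`, reindexed to `A₀ × A₁ × B₀` with the subsystems in this order. -/
def piB0 (Y : Matrix (A₀ × A₁) (A₀ × A₁) ℂ) :
    Matrix (A₀ × A₁ × B₀) (A₀ × A₁ × B₀) ℂ :=
  fun x y => ((Fintype.card B₀ : ℂ))⁻¹ * (if x.2.2 = y.2.2 then 1 else 0) *
    Y (x.1, x.2.1) (y.1, y.2.1)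

/-- The non-signalling conditions for a Choi matrix on `A₀ × A₁ × B₀ × B₁`:
`Tr_{A₁} J = π_{A₀} ⊗ Tr_{A₀A₁} J` and `Tr_{B₁} J = π_{B₀} ⊗ Tr_{B₀B₁} J`. -/
def NS (J : Matrix (A₀ × A₁ × B₀ × B₁) (A₀ × A₁ × B₀ × B₁) ℂ) : Prop :=
  trA1 J = piFst (trA0A1 J) ∧ trB1 J = piB0 (trB0B1 J)

/-- The optimal value `Λ(J)` of the SDP whose logarithm is the max-relative entropy of
bidirectional classical communication of the bipartite channel with Choi matrix `J`. -/
def Lam (J : Matrix (A₀ × A₁ × B₀ × B₁) (A₀ × A₁ × B₀ × B₁) ℂ) : ℝ :=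
  sInf {l : ℝ | ∃ Y : Matrix (A₀ × A₁ × B₀ × B₁) (A₀ × A₁ × B₀ × B₁) ℂ,
    LoewnerLE J Y ∧ trA1B1 Y = l • (1 : Matrix (A₀ × B₀) (A₀ × B₀) ℂ) ∧ NS Y}

end FourSystems

/-- Replacement map on the first tensor factor: `X ↦ π_S ⊗ Tr_S X`. -/
def replFst {S T : Type*} [Fintype S] [Fintype T] [DecidableEq S]
    (X : Matrix (S × T) (S × T) ℂ) : Matrix (S × T) (S × T) ℂ :=
  fun x y => ((Fintype.card S : ℂ))⁻¹ * (if x.1 = y.1 then 1 else 0) *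
    ∑ s : S, X (s, x.2) (s, y.2)

/-- The Choi matrix of a linear map `N : Matrix (A₀ × B₀) → Matrix (A₁ × B₁)`,
`J^N((a₀,b₀),(a₁,b₁)),((a₀',b₀'),(a₁',b₁')) = N(E_{(a₀,b₀),(a₀',b₀')})((a₁,b₁),(a₁',b₁'))`,
reindexed to `A₀ × A₁ × B₀ × B₁`. -/
def choi {A₀ B₀ A₁ B₁ : Type*} [Fintype A₀] [Fintype B₀] [DecidableEq A₀] [DecidableEq B₀]
    (N : Matrix (A₀ × B₀) (A₀ × B₀) ℂ →ₗ[ℂ] Matrix (A₁ × B₁) (A₁ × B₁) ℂ) :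
    Matrix (A₀ × A₁ × B₀ × B₁) (A₀ × A₁ × B₀ × B₁) ℂ :=
  fun x y =>
    N (Matrix.single (x.1, x.2.2.1) (y.1, y.2.2.1) 1) (x.2.1, x.2.2.2) (y.2.1, y.2.2.2)

/-- The replacement map as a linear map. -/
def replLin (S T : Type*) [Fintype S] [Fintype T] [DecidableEq S] :
    Matrix (S × T) (S × T) ℂ →ₗ[ℂ] Matrix (S × T) (S × T) ℂ where
  toFun := replFst
  map_add' X Y := by
    ext x y
    simp only [replFst, Matrix.add_apply, Finset.sum_add_distrib, mul_add]
  map_smul' c X := by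
    ext x y
    simp only [replFst, Matrix.smul_apply, smul_eq_mul, ← Finset.mul_sum, RingHom.id_apply]
    ring

/-- The partial trace as a linear map. -/
def trInpLin (S T : Type*) [Fintype S] :
    Matrix (S × T) (S × T) ℂ →ₗ[ℂ] Matrix T T ℂ where
  toFun := trInp
  map_add' X Y := by
    ext x y
    simp only [trInp, Matrix.add_apply, Finset.sum_add_distrib]
  map_smul' c X := by
    ext x y
    simp only [trInp, Matrix.smul_apply, smul_eq_mul, ← Finset.mul_sum, RingHom.id_apply]

lemma replFst_eq_iff {S T : Type*} [Fintype S] [Fintype T] [DecidableEq S] [Nonempty S]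
    (X Y : Matrix (S × T) (S × T) ℂ) : replFst X = replFst Y ↔ trInp X = trInp Y := by
  constructor
  · intro h
    ext t t'
    obtain ⟨s⟩ := ‹Nonempty S›
    have := congrFun (congrFun h (s, t)) (s, t')
    have hc : (Fintype.card S : ℂ) ≠ 0 := by
      have : Nonempty S := ⟨s⟩
      exact_mod_cast Fintype.card_ne_zero
    simpa [replFst, trInp, hc] using this
  · intro h
    ext x y
    have := congrFun (congrFun h x.2) y.2
    simp only [trInp] at this
    simp only [replFst, this]

lemma replFst_single {S T : Type*} [Fintype S] [Fintype T] [DecidableEq S] [DecidableEq T]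
    (a a' : S) (b b' : T) :
    replFst (Matrix.single (a, b) (a', b') (1 : ℂ)) =
      ((Fintype.card S : ℂ)⁻¹ * (if a = a' then 1 else 0)) •
        ∑ s : S, Matrix.single (s, b) (s, b') (1 : ℂ) := by
  ext ⟨s, t⟩ ⟨s', t'⟩
  simp only [replFst, Matrix.smul_apply, Matrix.sum_apply, Matrix.single_apply, Prod.mk.injEq,
    smul_eq_mul, mul_assoc]
  congr 1
  by_cases hb : b = t <;> by_cases hb' : b' = t' <;> by_cases ha : a = a' <;>
    by_cases hs : s = s' <;> simp [hb, hb', ha, hs, Finset.sum_ite_eq, ite_and]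
  all_goals
    intro h
    first
    | exact absurd h.symm ha
    | exact absurd h ha

/-- Choi characterization of the A-to-B non-signalling condition: a linear map `N` is
non-signalling from Alice to Bob iff its Choi matrix satisfies
`Tr_{A₁} J^N = π_{A₀} ⊗ Tr_{A₀A₁} J^N`. -/
theorem ns_A_to_B_iff_choi
    {A₀ B₀ A₁ B₁ : Type*}
    [Fintype A₀] [Fintype B₀] [Fintype A₁] [Fintype B₁]
    [DecidableEq A₀] [DecidableEq B₀] [DecidableEq A₁] [DecidableEq B₁]
    [Nonempty A₀] [Nonempty B₀] [Nonempty A₁] [Nonempty B₁]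
    (N : Matrix (A₀ × B₀) (A₀ × B₀) ℂ →ₗ[ℂ] Matrix (A₁ × B₁) (A₁ × B₁) ℂ) :
    (∀ X, replFst (N X) = replFst (N (replFst X))) ↔
      trA1 (choi N) = piFst (trA0A1 (choi N)) := by
  have h1 : (∀ X, replFst (N X) = replFst (N (replFst X))) ↔
      trInpLin A₁ B₁ ∘ₗ N = trInpLin A₁ B₁ ∘ₗ N ∘ₗ replLin A₀ B₀ := by
    rw [LinearMap.ext_iff]
    exact forall_congr' fun X => replFst_eq_iff _ _
  have key : ∀ a b a' b' c c',
      (trInpLin A₁ B₁ ∘ₗ N ∘ₗ replLin A₀ B₀) (Matrix.single (a, b) (a', b') 1) c c' =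
        piFst (trA0A1 (choi N)) (a, b, c) (a', b', c') := by
    intro a b a' b' c c'
    change trInp (N (replFst _)) c c' = _
    rw [replFst_single]
    simp only [map_smul, map_sum, trInp, piFst, trA0A1, choi, Matrix.smul_apply,
      Matrix.sum_apply, smul_eq_mul, ← Finset.mul_sum]
    rw [Finset.sum_comm]
  rw [h1]
  constructor
  · intro h
    ext ⟨a, b, c⟩ ⟨a', b', c'⟩
    rw [← key, ← h]
    rfl
  · intro h
    refine Matrix.ext_linearMap _ fun i j => LinearMap.ext_ring ?_
    obtain ⟨a, b⟩ := i
    obtain ⟨a', b'⟩ := j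
    ext c c'
    have := congrFun (congrFun h (a, b, c)) (a', b', c')
    rw [← key] at this
    exact this
end
end

section
/- Subadditivity of the max-relative entropy of bidirectional classical communication: let J₁ (indexed by A₀ × A₁ × B₀ × B₁) and J₂ (indexed by A₀' × A₁' × B₀' × B₁') be Choi matrices of bipartite channels. Then Λ(J₁ ⊠ J₂) ≤ Λ(J₁) · Λ(J₂), where J₁ ⊠ J₂ is the Kronecker product reindexed to (A₀ × A₀') × (A₁ × A₁') × (B₀ × B₀') × (B₁ × B₁'). Equivalently, the max-relative entropy of bidirectional classical communication log Λ is subadditive under tensor products of bipartite channels. -/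
open Matrix
open scoped ComplexOrder

noncomputable section

/-- Kronecker product of two matrices on four-fold systems, reindexed to
`(A₀ × A₀') × (A₁ × A₁') × (B₀ × B₀') × (B₁ × B₁')`. -/
def kron4 {A₀ A₁ B₀ B₁ A₀' A₁' B₀' B₁' : Type*}
    (J₁ : Matrix (A₀ × A₁ × B₀ × B₁) (A₀ × A₁ × B₀ × B₁) ℂ)
    (J₂ : Matrix (A₀' × A₁' × B₀' × B₁') (A₀' × A₁' × B₀' × B₁') ℂ) :
    Matrix ((A₀ × A₀') × (A₁ × A₁') × (B₀ × B₀') × (B₁ × B₁'))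
      ((A₀ × A₀') × (A₁ × A₁') × (B₀ × B₀') × (B₁ × B₁')) ℂ :=
  fun x y =>
    J₁ (x.1.1, x.2.1.1, x.2.2.1.1, x.2.2.2.1) (y.1.1, y.2.1.1, y.2.2.1.1, y.2.2.2.1) *
    J₂ (x.1.2, x.2.1.2, x.2.2.1.2, x.2.2.2.2) (y.1.2, y.2.1.2, y.2.2.1.2, y.2.2.2.2)

section Helpers

variable {A₀ A₁ B₀ B₁ A₀' A₁' B₀' B₁' : Type*}
    [Fintype A₀] [Fintype A₁] [Fintype B₀] [Fintype B₁]
    [Fintype A₀'] [Fintype A₁'] [Fintype B₀'] [Fintype B₁']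
    [DecidableEq A₀] [DecidableEq A₁] [DecidableEq B₀] [DecidableEq B₁]
    [DecidableEq A₀'] [DecidableEq A₁'] [DecidableEq B₀'] [DecidableEq B₁']

open scoped Matrix.Norms.L2Operator MatrixOrder in
theorem exists_le_smul_one {n : Type*} [Fintype n] [DecidableEq n] (J : Matrix n n ℂ)
    (h : J.PosSemidef) : ∃ c : ℝ, (c • (1 : Matrix n n ℂ) - J).PosSemidef := by
  refine ⟨‖J‖, ?_⟩
  have h1 : IsSelfAdjoint J := h.1
  have := h1.le_algebraMap_norm_self
  rw [Matrix.le_iff, Algebra.algebraMap_eq_smul_one] at this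
  exact this

theorem kron4_psd (X : Matrix (A₀ × A₁ × B₀ × B₁) (A₀ × A₁ × B₀ × B₁) ℂ)
    (Y : Matrix (A₀' × A₁' × B₀' × B₁') (A₀' × A₁' × B₀' × B₁') ℂ)
    (hX : X.PosSemidef) (hY : Y.PosSemidef) : (kron4 X Y).PosSemidef :=
  (hX.kronecker hY).submatrix (fun x : (A₀ × A₀') × (A₁ × A₁') × (B₀ × B₀') × (B₁ × B₁') =>
    ((x.1.1, x.2.1.1, x.2.2.1.1, x.2.2.2.1), (x.1.2, x.2.1.2, x.2.2.1.2, x.2.2.2.2)))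

theorem trA1_kron4 (X : Matrix (A₀ × A₁ × B₀ × B₁) (A₀ × A₁ × B₀ × B₁) ℂ)
    (Y : Matrix (A₀' × A₁' × B₀' × B₁') (A₀' × A₁' × B₀' × B₁') ℂ) (x y) :
    trA1 (kron4 X Y) x y = trA1 X (x.1.1, x.2.1.1, x.2.2.1) (y.1.1, y.2.1.1, y.2.2.1) *
      trA1 Y (x.1.2, x.2.1.2, x.2.2.2) (y.1.2, y.2.1.2, y.2.2.2) := by
  simp only [trA1, kron4, Fintype.sum_prod_type, Finset.sum_mul_sum]

theorem trB1_kron4 (X : Matrix (A₀ × A₁ × B₀ × B₁) (A₀ × A₁ × B₀ × B₁) ℂ)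
    (Y : Matrix (A₀' × A₁' × B₀' × B₁') (A₀' × A₁' × B₀' × B₁') ℂ) (x y) :
    trB1 (kron4 X Y) x y = trB1 X (x.1.1, x.2.1.1, x.2.2.1) (y.1.1, y.2.1.1, y.2.2.1) *
      trB1 Y (x.1.2, x.2.1.2, x.2.2.2) (y.1.2, y.2.1.2, y.2.2.2) := by
  simp only [trB1, kron4, Fintype.sum_prod_type, Finset.sum_mul_sum]

theorem sum_aux {S T S' T' : Type*} [Fintype S] [Fintype T] [Fintype S'] [Fintype T']
    (f : S → T → ℂ) (g : S' → T' → ℂ) :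
    ∑ s : S × S', ∑ t : T × T', f s.1 t.1 * g s.2 t.2 =
      (∑ s, ∑ t, f s t) * ∑ s, ∑ t, g s t := by
  simp only [Fintype.sum_prod_type, Finset.sum_mul_sum]

theorem trA0A1_kron4 (X : Matrix (A₀ × A₁ × B₀ × B₁) (A₀ × A₁ × B₀ × B₁) ℂ)
    (Y : Matrix (A₀' × A₁' × B₀' × B₁') (A₀' × A₁' × B₀' × B₁') ℂ) (x y) :
    trA0A1 (kron4 X Y) x y = trA0A1 X (x.1.1, x.2.1) (y.1.1, y.2.1) *
      trA0A1 Y (x.1.2, x.2.2) (y.1.2, y.2.2) :=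
  sum_aux (fun a b => X (a, b, x.1.1, x.2.1) (a, b, y.1.1, y.2.1))
    (fun a b => Y (a, b, x.1.2, x.2.2) (a, b, y.1.2, y.2.2))

theorem trB0B1_kron4 (X : Matrix (A₀ × A₁ × B₀ × B₁) (A₀ × A₁ × B₀ × B₁) ℂ)
    (Y : Matrix (A₀' × A₁' × B₀' × B₁') (A₀' × A₁' × B₀' × B₁') ℂ) (x y) :
    trB0B1 (kron4 X Y) x y = trB0B1 X (x.1.1, x.2.1) (y.1.1, y.2.1) *
      trB0B1 Y (x.1.2, x.2.2) (y.1.2, y.2.2) :=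
  sum_aux (fun a b => X (x.1.1, x.2.1, a, b) (y.1.1, y.2.1, a, b))
    (fun a b => Y (x.1.2, x.2.2, a, b) (y.1.2, y.2.2, a, b))

theorem trA1B1_kron4 (X : Matrix (A₀ × A₁ × B₀ × B₁) (A₀ × A₁ × B₀ × B₁) ℂ)
    (Y : Matrix (A₀' × A₁' × B₀' × B₁') (A₀' × A₁' × B₀' × B₁') ℂ) (x y) :
    trA1B1 (kron4 X Y) x y = trA1B1 X (x.1.1, x.2.1) (y.1.1, y.2.1) *
      trA1B1 Y (x.1.2, x.2.2) (y.1.2, y.2.2) :=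
  sum_aux (fun a b => X (x.1.1, a, x.2.1, b) (y.1.1, a, y.2.1, b))
    (fun a b => Y (x.1.2, a, x.2.2, b) (y.1.2, a, y.2.2, b))

theorem ite_aux {S T : Type*} [DecidableEq S] [DecidableEq T] (x y : S × T) :
    (if x = y then (1 : ℂ) else 0) =
      (if x.1 = y.1 then 1 else 0) * (if x.2 = y.2 then 1 else 0) := by
  by_cases h1 : x.1 = y.1 <;> by_cases h2 : x.2 = y.2 <;> simp [Prod.ext_iff, h1, h2]

theorem NS_kron4 (X : Matrix (A₀ × A₁ × B₀ × B₁) (A₀ × A₁ × B₀ × B₁) ℂ)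
    (Y : Matrix (A₀' × A₁' × B₀' × B₁') (A₀' × A₁' × B₀' × B₁') ℂ)
    (hX : NS X) (hY : NS Y) : NS (kron4 X Y) := by
  constructor
  · ext x y
    rw [trA1_kron4, hX.1, hY.1]
    simp only [piFst, trA0A1_kron4, ite_aux x.1 y.1, Fintype.card_prod, Nat.cast_mul, mul_inv]
    ring
  · ext x y
    rw [trB1_kron4, hX.2, hY.2]
    simp only [piB0, trB0B1_kron4, ite_aux x.2.2 y.2.2, Fintype.card_prod, Nat.cast_mul, mul_inv]
    ring

theorem trA1B1_kron4_one (X : Matrix (A₀ × A₁ × B₀ × B₁) (A₀ × A₁ × B₀ × B₁) ℂ)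
    (Y : Matrix (A₀' × A₁' × B₀' × B₁') (A₀' × A₁' × B₀' × B₁') ℂ) (k l : ℝ)
    (hX : trA1B1 X = k • (1 : Matrix (A₀ × B₀) (A₀ × B₀) ℂ))
    (hY : trA1B1 Y = l • (1 : Matrix (A₀' × B₀') (A₀' × B₀') ℂ)) :
    trA1B1 (kron4 X Y) = (k * l) • (1 : Matrix ((A₀ × A₀') × (B₀ × B₀')) _ ℂ) := by
  ext x y
  rw [trA1B1_kron4, hX, hY]
  simp only [Matrix.smul_apply, Matrix.one_apply, ite_aux, Complex.real_smul]
  push_cast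
  ring

theorem lam_nonempty [Nonempty A₀] [Nonempty B₀]
    (J : Matrix (A₀ × A₁ × B₀ × B₁) (A₀ × A₁ × B₀ × B₁) ℂ) (h : J.PosSemidef) :
    {l : ℝ | ∃ Y : Matrix (A₀ × A₁ × B₀ × B₁) (A₀ × A₁ × B₀ × B₁) ℂ,
    LoewnerLE J Y ∧ trA1B1 Y = l • (1 : Matrix (A₀ × B₀) (A₀ × B₀) ℂ) ∧ NS Y}.Nonempty := by
  obtain ⟨c, hc⟩ := exists_le_smul_one J h
  refine ⟨Fintype.card A₁ * Fintype.card B₁ * c, c • 1, hc, ?_, ?_, ?_⟩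
  · ext ⟨a, b⟩ ⟨a', b'⟩
    by_cases h1 : a = a' <;> by_cases h2 : b = b' <;>
      simp [trA1B1, Matrix.one_apply, h1, h2, mul_assoc]
  · ext ⟨a, b, d⟩ ⟨a', b', d'⟩
    by_cases h1 : a = a' <;> by_cases h2 : b = b' <;> by_cases h3 : d = d' <;>
      simp [trA1, piFst, trA0A1, Matrix.one_apply, h1, h2, h3]
  · ext ⟨a, b, d⟩ ⟨a', b', d'⟩
    by_cases h1 : a = a' <;> by_cases h2 : b = b' <;> by_cases h3 : d = d' <;>
      simp [trB1, piB0, trB0B1, Matrix.one_apply, h1, h2, h3]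

theorem one_le_of_mem [Nonempty A₀] [Nonempty B₀]
    (J Y : Matrix (A₀ × A₁ × B₀ × B₁) (A₀ × A₁ × B₀ × B₁) ℂ) (hJ : trA1B1 J = 1) (l : ℝ)
    (hY : LoewnerLE J Y) (hl : trA1B1 Y = l • (1 : Matrix (A₀ × B₀) (A₀ × B₀) ℂ)) : 1 ≤ l := by
  obtain ⟨a⟩ := ‹Nonempty A₀›
  obtain ⟨b⟩ := ‹Nonempty B₀›
  have h1 := congrFun (congrFun hJ (a, b)) (a, b)
  have h2 := congrFun (congrFun hl (a, b)) (a, b)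
  have h3 : trA1B1 J (a, b) (a, b) ≤ trA1B1 Y (a, b) (a, b) := by
    refine Finset.sum_le_sum fun i _ => Finset.sum_le_sum fun j _ => ?_
    have := hY.diag_nonneg (i := (a, i, b, j))
    simpa using this
  rw [h1, h2] at h3
  simp at h3
  exact_mod_cast h3

theorem loewner_kron4 (J₁ Y₁ : Matrix (A₀ × A₁ × B₀ × B₁) (A₀ × A₁ × B₀ × B₁) ℂ)
    (J₂ Y₂ : Matrix (A₀' × A₁' × B₀' × B₁') (A₀' × A₁' × B₀' × B₁') ℂ)
    (h₁ : J₁.PosSemidef) (h₂ : J₂.PosSemidef) (l₁ : LoewnerLE J₁ Y₁) (l₂ : LoewnerLE J₂ Y₂) :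
    LoewnerLE (kron4 J₁ J₂) (kron4 Y₁ Y₂) := by
  have hY : Y₂.PosSemidef := by simpa using Matrix.PosSemidef.add l₂ h₂
  have := (kron4_psd _ _ l₁ hY).add (kron4_psd _ _ h₁ l₂)
  unfold LoewnerLE
  convert this using 1
  ext x y
  simp only [kron4, Matrix.sub_apply, Matrix.add_apply]
  ring

end Helpers

/-- Subadditivity of the max-relative entropy of bidirectional classical communication:
for Choi matrices of bipartite channels, `Λ(J₁ ⊠ J₂) ≤ Λ(J₁) · Λ(J₂)`, i.e. `log Λ` is
subadditive under tensor products. -/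
theorem lam_subadditive
    {A₀ A₁ B₀ B₁ A₀' A₁' B₀' B₁' : Type*}
    [Fintype A₀] [Fintype A₁] [Fintype B₀] [Fintype B₁]
    [Fintype A₀'] [Fintype A₁'] [Fintype B₀'] [Fintype B₁']
    [DecidableEq A₀] [DecidableEq A₁] [DecidableEq B₀] [DecidableEq B₁]
    [DecidableEq A₀'] [DecidableEq A₁'] [DecidableEq B₀'] [DecidableEq B₁']
    [Nonempty A₀] [Nonempty A₁] [Nonempty B₀] [Nonempty B₁]
    [Nonempty A₀'] [Nonempty A₁'] [Nonempty B₀'] [Nonempty B₁']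
    (J₁ : Matrix (A₀ × A₁ × B₀ × B₁) (A₀ × A₁ × B₀ × B₁) ℂ)
    (J₂ : Matrix (A₀' × A₁' × B₀' × B₁') (A₀' × A₁' × B₀' × B₁') ℂ)
    (h₁ : J₁.PosSemidef) (hTP₁ : trA1B1 J₁ = 1)
    (h₂ : J₂.PosSemidef) (hTP₂ : trA1B1 J₂ = 1) :
    Lam (kron4 J₁ J₂) ≤ Lam J₁ * Lam J₂ := by
  have key : ∀ k l : ℝ,
      (∃ Y, LoewnerLE J₁ Y ∧ trA1B1 Y = k • (1 : Matrix (A₀ × B₀) (A₀ × B₀) ℂ) ∧ NS Y) →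
      (∃ Y, LoewnerLE J₂ Y ∧ trA1B1 Y = l • (1 : Matrix (A₀' × B₀') (A₀' × B₀') ℂ) ∧ NS Y) →
      Lam (kron4 J₁ J₂) ≤ k * l := by
    rintro k l ⟨Y, hY, hk, hN⟩ ⟨Z, hZ, hl, hM⟩
    refine csInf_le ⟨0, ?_⟩ ⟨kron4 Y Z, loewner_kron4 _ _ _ _ h₁ h₂ hY hZ,
      trA1B1_kron4_one _ _ _ _ hk hl, NS_kron4 _ _ hN hM⟩
    rintro m ⟨W, hW, hm, -⟩
    refine zero_le_one.trans (one_le_of_mem _ W ?_ m hW hm)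
    simpa using trA1B1_kron4_one J₁ J₂ 1 1 (by simpa using hTP₁) (by simpa using hTP₂)
  have p1 : 1 ≤ Lam J₁ := le_csInf (lam_nonempty J₁ h₁) (by
    rintro m ⟨W, hW, hm, -⟩
    exact one_le_of_mem _ W hTP₁ m hW hm)
  have step : ∀ l : ℝ,
      (∃ Y, LoewnerLE J₂ Y ∧ trA1B1 Y = l • (1 : Matrix (A₀' × B₀') (A₀' × B₀') ℂ) ∧ NS Y) →
      Lam (kron4 J₁ J₂) ≤ Lam J₁ * l := by
    intro l hl
    have l1 : 1 ≤ l := by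
      obtain ⟨W, hW, hm, -⟩ := hl
      exact one_le_of_mem _ W hTP₂ l hW hm
    rw [← div_le_iff₀ (by linarith)]
    refine le_csInf (lam_nonempty J₁ h₁) fun k hk => ?_
    rw [div_le_iff₀ (by linarith)]
    exact key k l hk hl
  rw [← div_le_iff₀' (by linarith)]
  refine le_csInf (lam_nonempty J₂ h₂) fun l hl => ?_
  rw [div_le_iff₀' (by linarith)]
  exact step l hl
end
end

section
/- Relation between the max-relative entropy and the robustness of bidirectional classical communication: let J, indexed by A₀ × A₁ × B₀ × B₁, be the Choi matrix of a bipartite channel. Then Λ(J) = 1 + R(J), where R(J) = sInf {r : ℝ | 0 ≤ r ∧ ∃ K indexed by A₀ × A₁ × B₀ × B₁, K is positive semidefinite ∧ Tr_{A₁B₁} K = I_{A₀B₀} ∧ (1/(1+r)) • (J + r • K) satisfies the non-signalling conditions}. -/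
open Matrix
open scoped ComplexOrder

noncomputable section

/-- The robustness of bidirectional classical communication `R(J)`: the least `r ≥ 0`
such that `(J + r K)/(1 + r)` is non-signalling for some Choi matrix `K` of a bipartite
channel. -/
def Rob {A₀ A₁ B₀ B₁ : Type*}
    [Fintype A₀] [Fintype A₁] [Fintype B₀] [Fintype B₁]
    [DecidableEq A₀] [DecidableEq A₁] [DecidableEq B₀] [DecidableEq B₁]
    (J : Matrix (A₀ × A₁ × B₀ × B₁) (A₀ × A₁ × B₀ × B₁) ℂ) : ℝ :=
  sInf {r : ℝ | 0 ≤ r ∧ ∃ K : Matrix (A₀ × A₁ × B₀ × B₁) (A₀ × A₁ × B₀ × B₁) ℂ,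
    K.PosSemidef ∧ trA1B1 K = 1 ∧ NS ((1 / (1 + r)) • (J + r • K))}

section Helpers

variable {A₀ A₁ B₀ B₁ : Type*} [Fintype A₀] [Fintype A₁] [Fintype B₀] [Fintype B₁]
  [DecidableEq A₀] [DecidableEq A₁] [DecidableEq B₀] [DecidableEq B₁]

theorem NS_smul_aux (c : ℝ) (Y : Matrix (A₀ × A₁ × B₀ × B₁) (A₀ × A₁ × B₀ × B₁) ℂ)
    (h : NS Y) : NS (c • Y) := by
  obtain ⟨h1, h2⟩ := h
  constructor
  · ext x y
    have := congrFun (congrFun h1 x) y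
    simp only [trA1, piFst, trA0A1, Matrix.smul_apply, Complex.real_smul, ← Finset.mul_sum] at this ⊢
    rw [this]; ring
  · ext x y
    have := congrFun (congrFun h2 x) y
    simp only [trB1, piB0, trB0B1, Matrix.smul_apply, Complex.real_smul, ← Finset.mul_sum] at this ⊢
    rw [this]; ring

theorem tr_smul_aux (c : ℝ) (Y : Matrix (A₀ × A₁ × B₀ × B₁) (A₀ × A₁ × B₀ × B₁) ℂ) :
    trA1B1 (c • Y) = c • trA1B1 Y := by
  ext x y
  simp only [trA1B1, Matrix.smul_apply, Finset.smul_sum]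

theorem tr_add_aux (X Y : Matrix (A₀ × A₁ × B₀ × B₁) (A₀ × A₁ × B₀ × B₁) ℂ) :
    trA1B1 (X + Y) = trA1B1 X + trA1B1 Y := by
  ext x y
  simp only [trA1B1, Matrix.add_apply, Finset.sum_add_distrib]

theorem tr_sub_aux (X Y : Matrix (A₀ × A₁ × B₀ × B₁) (A₀ × A₁ × B₀ × B₁) ℂ) :
    trA1B1 (X - Y) = trA1B1 X - trA1B1 Y := by
  ext x y
  simp only [trA1B1, Matrix.sub_apply, Finset.sum_sub_distrib]

theorem NS_one_aux [Nonempty A₀] [Nonempty B₀] :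
    NS (1 : Matrix (A₀ × A₁ × B₀ × B₁) (A₀ × A₁ × B₀ × B₁) ℂ) := by
  have ha : (Fintype.card A₀ : ℂ) ≠ 0 := by exact_mod_cast Fintype.card_ne_zero
  have hb : (Fintype.card B₀ : ℂ) ≠ 0 := by exact_mod_cast Fintype.card_ne_zero
  constructor
  · ext ⟨a, b⟩ ⟨a', b'⟩
    by_cases h : a = a' <;> by_cases h' : b = b' <;>
      simp [trA1, piFst, trA0A1, Matrix.one_apply, h, h', ha]
  · ext ⟨a, b, c⟩ ⟨a', b', c'⟩
    by_cases h : a = a' <;> by_cases h' : b = b' <;> by_cases h'' : c = c' <;>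
      simp [trB1, piB0, trB0B1, Matrix.one_apply, h, h', h'', hb]

theorem tr_one_aux :
    trA1B1 (1 : Matrix (A₀ × A₁ × B₀ × B₁) (A₀ × A₁ × B₀ × B₁) ℂ) =
      ((Fintype.card A₁ * Fintype.card B₁ : ℕ) : ℝ) • 1 := by
  ext ⟨a, b⟩ ⟨a', b'⟩
  by_cases h : a = a' <;> by_cases h' : b = b' <;>
      simp [trA1B1, Matrix.one_apply, h, h']

theorem trace_aux (Y : Matrix (A₀ × A₁ × B₀ × B₁) (A₀ × A₁ × B₀ × B₁) ℂ) :
    Y.trace = (trA1B1 Y).trace := by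
  simp only [Matrix.trace, Matrix.diag, trA1B1, Fintype.sum_prod_type]
  refine Finset.sum_congr rfl fun a _ => ?_
  rw [Finset.sum_comm]

open scoped MatrixOrder Matrix.Norms.L2Operator in
theorem exists_ge_aux {n : Type*} [Fintype n] [DecidableEq n] (J : Matrix n n ℂ)
    (hJ : J.PosSemidef) : ∃ c : ℝ, LoewnerLE J (c • (1 : Matrix n n ℂ)) := by
  refine ⟨‖J‖, ?_⟩
  have h := IsSelfAdjoint.le_algebraMap_norm_self (a := J) hJ.1
  rw [Algebra.algebraMap_eq_smul_one] at h
  exact Matrix.le_iff.mp h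

end Helpers

/-- Relation between the max-relative entropy and the robustness of bidirectional
classical communication: `Λ(J) = 1 + R(J)` for the Choi matrix `J` of a bipartite
channel. -/
theorem lam_eq_one_add_rob
    {A₀ A₁ B₀ B₁ : Type*}
    [Fintype A₀] [Fintype A₁] [Fintype B₀] [Fintype B₁]
    [DecidableEq A₀] [DecidableEq A₁] [DecidableEq B₀] [DecidableEq B₁]
    [Nonempty A₀] [Nonempty A₁] [Nonempty B₀] [Nonempty B₁]
    (J : Matrix (A₀ × A₁ × B₀ × B₁) (A₀ × A₁ × B₀ × B₁) ℂ)
    (hJ : J.PosSemidef) (hTP : trA1B1 J = 1) :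
    Lam J = 1 + Rob J := by
  have hset : {l : ℝ | ∃ Y : Matrix (A₀ × A₁ × B₀ × B₁) (A₀ × A₁ × B₀ × B₁) ℂ,
      LoewnerLE J Y ∧ trA1B1 Y = l • (1 : Matrix (A₀ × B₀) (A₀ × B₀) ℂ) ∧ NS Y} =
      (fun r : ℝ => 1 + r) '' {r : ℝ | 0 ≤ r ∧
        ∃ K : Matrix (A₀ × A₁ × B₀ × B₁) (A₀ × A₁ × B₀ × B₁) ℂ,
        K.PosSemidef ∧ trA1B1 K = 1 ∧ NS ((1 / (1 + r)) • (J + r • K))} := by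
    ext l
    constructor
    · rintro ⟨Y, hY, htr, hNS⟩
      have hD : trA1B1 (Y - J) = (l - 1) • (1 : Matrix (A₀ × B₀) (A₀ × B₀) ℂ) := by
        rw [tr_sub_aux, htr, hTP, sub_smul, one_smul]
      have hpsd : (Y - J).PosSemidef := hY
      have hl : 0 ≤ l - 1 := by
        obtain ⟨a⟩ := (inferInstance : Nonempty A₀)
        obtain ⟨b⟩ := (inferInstance : Nonempty B₀)
        have h := congrFun (congrFun hD (a, b)) (a, b)
        have h0 : 0 ≤ trA1B1 (Y - J) (a, b) (a, b) :=
          Finset.sum_nonneg fun _ _ => Finset.sum_nonneg fun _ _ => hpsd.diag_nonneg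
        rw [h, Matrix.smul_apply, Matrix.one_apply_eq, Complex.real_smul, mul_one] at h0
        exact_mod_cast h0
      refine ⟨l - 1, ⟨hl, ?_⟩, by ring⟩
      rcases hl.eq_or_lt with h | h
      · refine ⟨J, hJ, hTP, ?_⟩
        have hz : Y - J = 0 := by
          rw [← hpsd.trace_eq_zero_iff, trace_aux, hD, ← h]; simp
        rw [← h, ← sub_eq_zero.mp hz]
        simpa using hNS
      · refine ⟨(l - 1)⁻¹ • (Y - J), hpsd.smul (inv_nonneg.mpr hl), ?_, ?_⟩
        · rw [tr_smul_aux, hD, smul_smul, inv_mul_cancel₀ h.ne', one_smul]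
        · rw [smul_smul, mul_inv_cancel₀ h.ne', one_smul, add_sub_cancel, add_sub_cancel]
          exact NS_smul_aux _ _ hNS
    · rintro ⟨r, ⟨hr, K, hK, htr, hNS⟩, rfl⟩
      refine ⟨J + r • K, ?_, ?_, ?_⟩
      · unfold LoewnerLE
        rw [add_sub_cancel_left]
        exact hK.smul hr
      · rw [tr_add_aux, tr_smul_aux, hTP, htr, add_smul, one_smul]
      · have := NS_smul_aux (1 + r) _ hNS
        rwa [smul_smul, mul_one_div_cancel (by positivity), one_smul] at this
  have hne : {l : ℝ | ∃ Y : Matrix (A₀ × A₁ × B₀ × B₁) (A₀ × A₁ × B₀ × B₁) ℂ,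
      LoewnerLE J Y ∧ trA1B1 Y = l • (1 : Matrix (A₀ × B₀) (A₀ × B₀) ℂ) ∧ NS Y}.Nonempty := by
    obtain ⟨c, hc⟩ := exists_ge_aux J hJ
    refine ⟨c * ((Fintype.card A₁ * Fintype.card B₁ : ℕ) : ℝ), c • 1, hc, ?_,
      NS_smul_aux _ _ NS_one_aux⟩
    rw [tr_smul_aux, tr_one_aux, smul_smul]
  unfold Lam Rob
  rw [hset] at hne ⊢
  exact ((OrderIso.addLeft (1 : ℝ)).map_csInf' hne.of_image ⟨0, fun _ h => h.1⟩).symm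
end
end

section
/- The channel E′ used in the one-shot cost lower bound is a non-signalling bipartite channel: let m ≥ 2 and take A₀ = A₁ = B₀ = B₁ = Fin m. Let C_{A₀B₁} = ∑_k E_{kk} ⊗ E_{kk} (indexed by A₀ × B₁, where E_{kk} is a matrix unit), define C_{B₀A₁} analogously, and set J′ = (1/m) • (C_{A₀B₁} ⊠ C_{B₀A₁}) + (1/(m(m−1))) • ((I − C)_{A₀B₁} ⊠ (I − C)_{B₀A₁}), a matrix indexed by A₀ × A₁ × B₀ × B₁ (with the natural reindexing). Then J′ is positive semidefinite, Tr_{A₁B₁} J′ = I_{A₀B₀}, Tr_{A₁} J′ = (1/m) • I_{A₀B₀B₁} and Tr_{B₁} J′ = (1/m) • I_{A₀A₁B₀}; in particular J′ is the Choi matrix of a bipartite channel satisfying the non-signalling conditions. -/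
open Matrix
open scoped ComplexOrder

noncomputable section

/-- `C_{ST} = ∑ k, E_{kk} ⊗ E_{kk}`, the Choi matrix of the noiseless classical channel
on `m` messages (indexed by `Fin m × Fin m`). -/
def classChoi (m : ℕ) : Matrix (Fin m × Fin m) (Fin m × Fin m) ℂ :=
  fun x y => if x.1 = x.2 ∧ y.1 = y.2 ∧ x.1 = y.1 then 1 else 0

/-- `C = C_{A₀B₁} ⊠ C_{B₀A₁}`, the Choi matrix of the noiseless bidirectional classical
channel `Υ_m`, indexed by `A₀ × A₁ × B₀ × B₁` (all equal to `Fin m`). -/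
def upsChoi (m : ℕ) : Matrix (Fin m × Fin m × Fin m × Fin m) (Fin m × Fin m × Fin m × Fin m) ℂ :=
  fun x y =>
    classChoi m (x.1, x.2.2.2) (y.1, y.2.2.2) * classChoi m (x.2.2.1, x.2.1) (y.2.2.1, y.2.1)

/-- `J′ = (1/m) • (C_{A₀B₁} ⊠ C_{B₀A₁})
      + (1/(m(m−1))) • ((I − C)_{A₀B₁} ⊠ (I − C)_{B₀A₁})`,
indexed by `A₀ × A₁ × B₀ × B₁` (all equal to `Fin m`). -/
def Jprime (m : ℕ) : Matrix (Fin m × Fin m × Fin m × Fin m) (Fin m × Fin m × Fin m × Fin m) ℂ :=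
  fun x y =>
    (m : ℂ)⁻¹ *
      (classChoi m (x.1, x.2.2.2) (y.1, y.2.2.2) *
        classChoi m (x.2.2.1, x.2.1) (y.2.2.1, y.2.1)) +
    ((m : ℂ) * ((m : ℂ) - 1))⁻¹ *
      ((1 - classChoi m) (x.1, x.2.2.2) (y.1, y.2.2.2) *
        (1 - classChoi m) (x.2.2.1, x.2.1) (y.2.2.1, y.2.1))

/-- Indicator used for the diagonal entries. -/
def auxP {m : ℕ} (a b : Fin m) : ℂ := if a = b then 1 else 0

/-- Diagonal entries of `J′`. -/
def auxD (m : ℕ) (x : Fin m × Fin m × Fin m × Fin m) : ℂ :=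
  (m : ℂ)⁻¹ * (auxP x.1 x.2.2.2 * auxP x.2.2.1 x.2.1) +
    ((m : ℂ) * ((m : ℂ) - 1))⁻¹ * ((1 - auxP x.1 x.2.2.2) * (1 - auxP x.2.2.1 x.2.1))

theorem classChoi_eq (m : ℕ) (x y : Fin m × Fin m) :
    classChoi m x y = if x = y then auxP x.1 x.2 else 0 := by
  obtain ⟨a, b⟩ := x
  obtain ⟨c, d⟩ := y
  simp only [classChoi, auxP, Prod.mk.injEq]
  split_ifs <;> grind

theorem one_sub_classChoi_eq (m : ℕ) (x y : Fin m × Fin m) :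
    (1 - classChoi m) x y = if x = y then 1 - auxP x.1 x.2 else 0 := by
  rw [Matrix.sub_apply, classChoi_eq, Matrix.one_apply]
  split_ifs <;> simp

theorem Jprime_apply_eq (m : ℕ) (x y : Fin m × Fin m × Fin m × Fin m) :
    Jprime m x y = if x = y then auxD m x else 0 := by
  obtain ⟨a, b, c, d⟩ := x
  obtain ⟨a', b', c', d'⟩ := y
  simp only [Jprime, classChoi_eq, one_sub_classChoi_eq, auxD, Prod.mk.injEq]
  by_cases h1 : a = a' <;> by_cases h2 : b = b' <;> by_cases h3 : c = c' <;>
    by_cases h4 : d = d' <;> simp [h1, h2, h3, h4]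

theorem sum_auxP_right {m : ℕ} (a : Fin m) : ∑ b, auxP a b = 1 := by simp [auxP]

theorem auxP_cases {m : ℕ} (a b : Fin m) : auxP a b = 0 ∨ auxP a b = 1 := by
  unfold auxP; split_ifs <;> simp

theorem sum_auxD_a (m : ℕ) (hm : 2 ≤ m) (a c d : Fin m) :
    ∑ b, auxD m (a, b, c, d) = (m : ℂ)⁻¹ := by
  have h0 : (m : ℂ) ≠ 0 := by norm_cast; omega
  have h1 : (m : ℂ) - 1 ≠ 0 := by
    rw [sub_ne_zero]; norm_cast; omega
  simp only [auxD, Finset.sum_add_distrib, ← Finset.mul_sum, Finset.sum_sub_distrib,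
    sum_auxP_right, Finset.sum_const, Finset.card_univ, Fintype.card_fin, nsmul_eq_mul]
  field_simp
  ring

theorem sum_auxD_b (m : ℕ) (hm : 2 ≤ m) (a b c : Fin m) :
    ∑ d, auxD m (a, b, c, d) = (m : ℂ)⁻¹ := by
  have h0 : (m : ℂ) ≠ 0 := by norm_cast; omega
  have h1 : (m : ℂ) - 1 ≠ 0 := by
    rw [sub_ne_zero]; norm_cast; omega
  simp only [auxD, Finset.sum_add_distrib, ← Finset.mul_sum, ← Finset.sum_mul,
    Finset.sum_sub_distrib,
    sum_auxP_right, Finset.sum_const, Finset.card_univ, Fintype.card_fin, nsmul_eq_mul]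
  field_simp
  ring

theorem auxD_nonneg (m : ℕ) (hm : 2 ≤ m) (x : Fin m × Fin m × Fin m × Fin m) :
    0 ≤ auxD m x := by
  have h0 : (0 : ℂ) ≤ (m : ℂ)⁻¹ := by
    have : (0 : ℝ) ≤ (m : ℝ)⁻¹ := by positivity
    simpa using Complex.zero_le_real.mpr this
  have h1 : (0 : ℂ) ≤ ((m : ℂ) * ((m : ℂ) - 1))⁻¹ := by
    have h2 : (2 : ℝ) ≤ m := by exact_mod_cast hm
    have h3 : (0 : ℝ) ≤ (m : ℝ) - 1 := by linarith
    have : (0 : ℝ) ≤ ((m : ℝ) * ((m : ℝ) - 1))⁻¹ := by positivity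
    have h4 := Complex.zero_le_real.mpr this
    push_cast at h4
    exact h4
  unfold auxD
  rcases auxP_cases x.1 x.2.2.2 with h | h <;> rcases auxP_cases x.2.2.1 x.2.1 with h' | h' <;>
    rw [h, h'] <;> simp only [sub_zero, sub_self, mul_zero, mul_one, zero_mul, add_zero,
      zero_add, le_refl, h0, h1]

theorem trA1_entry (m : ℕ) (hm : 2 ≤ m) (x y : Fin m × Fin m × Fin m) :
    trA1 (Jprime m) x y = if x = y then (m : ℂ)⁻¹ else 0 := by
  obtain ⟨a, c, d⟩ := x
  obtain ⟨a', c', d'⟩ := y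
  simp only [trA1, Jprime_apply_eq, Prod.mk.injEq, true_and]
  split_ifs
  · exact sum_auxD_a m hm a c d
  · simp

theorem trB1_entry (m : ℕ) (hm : 2 ≤ m) (x y : Fin m × Fin m × Fin m) :
    trB1 (Jprime m) x y = if x = y then (m : ℂ)⁻¹ else 0 := by
  obtain ⟨a, c, d⟩ := x
  obtain ⟨a', c', d'⟩ := y
  simp only [trB1, Jprime_apply_eq, Prod.mk.injEq, and_true]
  split_ifs
  · exact sum_auxD_b m hm a c d
  · simp

/-- The channel `E′` used in the one-shot cost lower bound is a non-signalling bipartite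
channel: `J′` is positive semidefinite, `Tr_{A₁B₁} J′ = I`, `Tr_{A₁} J′ = (1/m) • I` and
`Tr_{B₁} J′ = (1/m) • I`; in particular `J′` is the Choi matrix of a bipartite channel
satisfying the non-signalling conditions. -/
theorem Jprime_is_ns_channel (m : ℕ) (hm : 2 ≤ m) :
    (Jprime m).PosSemidef ∧
    trA1B1 (Jprime m) = 1 ∧
    trA1 (Jprime m) = (m : ℝ)⁻¹ • (1 : Matrix (Fin m × Fin m × Fin m) (Fin m × Fin m × Fin m) ℂ) ∧
    trB1 (Jprime m) = (m : ℝ)⁻¹ • (1 : Matrix (Fin m × Fin m × Fin m) (Fin m × Fin m × Fin m) ℂ) ∧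
    NS (Jprime m) := by
  have h0 : (m : ℂ) ≠ 0 := by norm_cast; omega
  refine ⟨?_, ?_, ?_, ?_, ?_, ?_⟩
  · have : Jprime m = Matrix.diagonal (auxD m) := by
      ext x y
      rw [Jprime_apply_eq, Matrix.diagonal_apply]
    rw [this]
    exact Matrix.PosSemidef.diagonal (fun x => auxD_nonneg m hm x)
  · ext x y
    have : trA1B1 (Jprime m) x y
        = ∑ a, trB1 (Jprime m) (x.1, a, x.2) (y.1, a, y.2) := rfl
    rw [this]
    obtain ⟨a, c⟩ := x
    obtain ⟨a', c'⟩ := y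
    simp only [trB1_entry m hm, Prod.mk.injEq, true_and, Matrix.one_apply]
    split_ifs <;> simp [h0]
  · ext x y
    rw [trA1_entry m hm, Matrix.smul_apply, Matrix.one_apply]
    split_ifs <;> simp
  · ext x y
    rw [trB1_entry m hm, Matrix.smul_apply, Matrix.one_apply]
    split_ifs <;> simp
  · ext x y
    have : trA0A1 (Jprime m) x.2 y.2
        = ∑ a, trA1 (Jprime m) (a, x.2) (a, y.2) := rfl
    rw [piFst, this]
    obtain ⟨a, c⟩ := x
    obtain ⟨a', c'⟩ := y
    simp only [trA1_entry m hm, Prod.mk.injEq, true_and]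
    by_cases h1 : a = a' <;> by_cases h2 : c = c' <;> simp [h0, h1, h2]
  · ext x y
    have : trB0B1 (Jprime m) (x.1, x.2.1) (y.1, y.2.1)
        = ∑ b, trB1 (Jprime m) (x.1, x.2.1, b) (y.1, y.2.1, b) := rfl
    rw [piB0, this]
    obtain ⟨a, b, c⟩ := x
    obtain ⟨a', b', c'⟩ := y
    simp only [trB1_entry m hm, Prod.mk.injEq, and_true]
    by_cases h1 : a = a' <;> by_cases h2 : b = b' <;> by_cases h3 : c = c' <;>
      simp [h0, h1, h2, h3]
end
end

section
/- The max-relative entropy of bidirectional classical communication of the noiseless bidirectional classical channel Υ_m is at most log m: let m ≥ 2, A₀ = A₁ = B₀ = B₁ = Fin m, and let C = C_{A₀B₁} ⊠ C_{B₀A₁} (indexed by A₀ × A₁ × B₀ × B₁) be the Choi matrix of Υ_m, where C_{ST} = ∑_k E_{kk} ⊗ E_{kk}. Then (m : ℝ) belongs to the feasible set defining Λ(C) — explicitly, Y := m • ((1/m) • C + (1/(m(m−1))) • ((I − C)_{A₀B₁} ⊠ (I − C)_{B₀A₁})) satisfies C ≤ Y, Tr_{A₁B₁} Y = m • I_{A₀B₀},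 Tr_{A₁} Y = π_{A₀} ⊗ Tr_{A₀A₁} Y and Tr_{B₁} Y = π_{B₀} ⊗ Tr_{B₀B₁} Y — and consequently Λ(C) ≤ m. -/
open Matrix
open scoped ComplexOrder

noncomputable section

/-- The diagonal of `m • Jprime m`. -/
def dg (m : ℕ) (p q : Prop) [Decidable p] [Decidable q] : ℂ :=
  (if p then 1 else 0) * (if q then 1 else 0) +
    ((m : ℂ) - 1)⁻¹ * ((if p then 0 else 1) * (if q then 0 else 1))

lemma one_sub_choi (m : ℕ) (x y : Fin m × Fin m) :
    (1 - classChoi m) x y = if x = y then (if x.1 = x.2 then 0 else 1) else 0 := by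
  obtain ⟨a, b⟩ := x
  obtain ⟨c, d⟩ := y
  simp only [Matrix.sub_apply, Matrix.one_apply, classChoi, Prod.mk.injEq]
  by_cases h1 : a = b <;> by_cases h2 : a = c <;> by_cases h3 : b = d <;> by_cases h4 : c = d <;>
    simp_all

lemma choi_eq (m : ℕ) (x y : Fin m × Fin m) :
    classChoi m x y = if x = y then (if x.1 = x.2 then 1 else 0) else 0 := by
  obtain ⟨a, b⟩ := x
  obtain ⟨c, d⟩ := y
  simp only [classChoi, Prod.mk.injEq]
  by_cases h1 : a = b <;> by_cases h2 : a = c <;> by_cases h3 : b = d <;> by_cases h4 : c = d <;>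
    simp_all

lemma Y_eq (m : ℕ) (hm : 2 ≤ m) (a b c d a' b' c' d' : Fin m) :
    ((m : ℂ) • Jprime m) (a, b, c, d) (a', b', c', d') =
      if a = a' ∧ b = b' ∧ c = c' ∧ d = d' then dg m (a = d) (c = b) else 0 := by
  have hm0 : (m : ℂ) ≠ 0 := by
    have : m ≠ 0 := by omega
    exact_mod_cast this
  simp only [Matrix.smul_apply, Jprime, one_sub_choi, choi_eq, smul_eq_mul, Prod.mk.injEq, dg,
    mul_inv]
  by_cases h : a = a' ∧ b = b' ∧ c = c' ∧ d = d'
  · obtain ⟨rfl, rfl, rfl, rfl⟩ := h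
    simp only [and_self, if_true]
    field_simp
  · rw [if_neg h]
    by_cases h1 : a = a' ∧ d = d'
    · have h2 : ¬ (c = c' ∧ b = b') := by tauto
      simp [h2]
    · simp [h1]

lemma sum_dg (m : ℕ) (hm : 2 ≤ m) (p : Prop) [Decidable p] (c : Fin m) :
    ∑ b : Fin m, dg m p (c = b) = 1 := by
  have hm1 : (m : ℂ) - 1 ≠ 0 := by
    intro h
    have h2 : (m : ℂ) = (1 : ℕ) := by push_cast; linear_combination h
    have := Nat.cast_injective h2
    omega
  have h0 : ∀ b : Fin m, (if c = b then (0 : ℂ) else 1) = 1 - if c = b then 1 else 0 := by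
    intro b; split_ifs <;> simp
  simp only [dg, h0]
  rw [Finset.sum_add_distrib, ← Finset.mul_sum, ← Finset.mul_sum, ← Finset.mul_sum,
    Finset.sum_sub_distrib]
  by_cases h : p <;> simp [h, hm1]

lemma sum_dg2 (m : ℕ) (hm : 2 ≤ m) (p : Prop) [Decidable p] (c : Fin m) :
    ∑ b : Fin m, dg m (c = b) p = 1 := by
  rw [← sum_dg m hm p c]
  refine Finset.sum_congr rfl fun b _ => ?_
  simp only [dg]; ring

lemma trA1_Y (m : ℕ) (hm : 2 ≤ m) : trA1 ((m : ℂ) • Jprime m) = 1 := by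
  ext ⟨a, c, d⟩ ⟨a', c', d'⟩
  simp only [trA1, Y_eq m hm, Matrix.one_apply, Prod.mk.injEq, true_and]
  by_cases h : a = a' ∧ c = c' ∧ d = d'
  · simp only [if_pos h]; exact sum_dg m hm _ _
  · simp [h]

lemma trB1_Y (m : ℕ) (hm : 2 ≤ m) : trB1 ((m : ℂ) • Jprime m) = 1 := by
  ext ⟨a, b, c⟩ ⟨a', b', c'⟩
  simp only [trB1, Y_eq m hm, Matrix.one_apply, Prod.mk.injEq, and_true]
  by_cases h : a = a' ∧ b = b' ∧ c = c'
  · simp only [if_pos h]; exact sum_dg2 m hm _ _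
  · simp [h]

lemma trA0A1_Y (m : ℕ) (hm : 2 ≤ m) : trA0A1 ((m : ℂ) • Jprime m) = (m : ℂ) • 1 := by
  ext x y
  have h : ∀ a₀ : Fin m, ∑ a₁ : Fin m, ((m : ℂ) • Jprime m) (a₀, a₁, x) (a₀, a₁, y) =
      (1 : Matrix (Fin m × Fin m × Fin m) (Fin m × Fin m × Fin m) ℂ) (a₀, x) (a₀, y) := by
    intro a₀; rw [← trA1_Y m hm]; rfl
  simp only [trA0A1, h]
  simp only [Matrix.smul_apply, Matrix.one_apply, Prod.mk.injEq, true_and]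
  simp

lemma trB0B1_Y (m : ℕ) (hm : 2 ≤ m) : trB0B1 ((m : ℂ) • Jprime m) = (m : ℂ) • 1 := by
  ext ⟨a, b⟩ ⟨a', b'⟩
  have h : ∀ c : Fin m, ∑ d : Fin m, ((m : ℂ) • Jprime m) (a, b, c, d) (a', b', c, d) =
      (1 : Matrix (Fin m × Fin m × Fin m) (Fin m × Fin m × Fin m) ℂ) (a, b, c) (a', b', c) := by
    intro c; rw [← trB1_Y m hm]; rfl
  simp only [trB0B1, h]
  simp only [Matrix.smul_apply, Matrix.one_apply, Prod.mk.injEq, and_true]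
  simp

lemma trA1B1_Y (m : ℕ) (hm : 2 ≤ m) : trA1B1 ((m : ℂ) • Jprime m) = (m : ℝ) • 1 := by
  ext ⟨a, c⟩ ⟨a', c'⟩
  have h : ∀ b : Fin m, ∑ d : Fin m, ((m : ℂ) • Jprime m) (a, b, c, d) (a', b, c', d) =
      (1 : Matrix (Fin m × Fin m × Fin m) (Fin m × Fin m × Fin m) ℂ) (a, b, c) (a', b, c') := by
    intro c; rw [← trB1_Y m hm]; rfl
  simp only [trA1B1, h]
  simp only [Matrix.smul_apply, Matrix.one_apply, Prod.mk.injEq, true_and]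
  simp

lemma le_Y (m : ℕ) (hm : 2 ≤ m) : LoewnerLE (upsChoi m) ((m : ℂ) • Jprime m) := by
  have h : (m : ℂ) • Jprime m - upsChoi m = Matrix.diagonal fun x =>
      ((((m : ℝ) - 1)⁻¹ * ((if x.1 = x.2.2.2 then 0 else 1) *
        (if x.2.2.1 = x.2.1 then 0 else 1)) : ℝ) : ℂ) := by
    ext ⟨a, b, c, d⟩ ⟨a', b', c', d'⟩
    rw [Matrix.sub_apply, Y_eq m hm, Matrix.diagonal_apply]
    simp only [upsChoi, choi_eq, Prod.mk.injEq, dg]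
    by_cases h : a = a' ∧ b = b' ∧ c = c' ∧ d = d'
    · obtain ⟨rfl, rfl, rfl, rfl⟩ := h
      simp only [and_self, if_true]
      by_cases p : a = d <;> by_cases q : c = b <;> simp [p, q]
    · rw [if_neg h, if_neg h]
      by_cases h1 : a = a' ∧ d = d'
      · have h2 : ¬ (c = c' ∧ b = b') := by tauto
        simp [h2]
      · simp [h1]
  rw [LoewnerLE, h]
  refine Matrix.PosSemidef.diagonal fun x => ?_
  have h1 : (0 : ℝ) ≤ (m : ℝ) - 1 := by
    have : (2 : ℝ) ≤ m := by exact_mod_cast hm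
    linarith
  rw [Pi.zero_apply, Complex.zero_le_real]
  refine mul_nonneg (inv_nonneg.2 h1) (mul_nonneg ?_ ?_) <;> split_ifs <;> norm_num

lemma ns_Y (m : ℕ) (hm : 2 ≤ m) : NS ((m : ℂ) • Jprime m) := by
  have hm0 : (m : ℂ) ≠ 0 := by
    have : m ≠ 0 := by omega
    exact_mod_cast this
  constructor
  · rw [trA1_Y m hm, trA0A1_Y m hm]
    ext ⟨a, x⟩ ⟨a', x'⟩
    simp only [piFst, Matrix.one_apply, Matrix.smul_apply, Prod.mk.injEq (α := Fin m),
      Fintype.card_fin, smul_eq_mul]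
    by_cases h : a = a' <;> by_cases h2 : x = x' <;> simp [h, h2, hm0]
  · rw [trB1_Y m hm, trB0B1_Y m hm]
    ext ⟨a, b, c⟩ ⟨a', b', c'⟩
    simp only [piB0, Matrix.one_apply, Matrix.smul_apply, Prod.mk.injEq,
      Fintype.card_fin, smul_eq_mul]
    by_cases h : a = a' <;> by_cases h2 : b = b' <;> by_cases h3 : c = c' <;>
      simp [h, h2, h3, hm0]

theorem lam_upsChoi_le (m : ℕ) (hm : 2 ≤ m) :
    (LoewnerLE (upsChoi m) ((m : ℂ) • Jprime m) ∧
      trA1B1 ((m : ℂ) • Jprime m) =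
        (m : ℝ) • (1 : Matrix (Fin m × Fin m) (Fin m × Fin m) ℂ) ∧
      NS ((m : ℂ) • Jprime m)) ∧
    Lam (upsChoi m) ≤ m := by
  have H := And.intro (le_Y m hm) (And.intro (trA1B1_Y m hm) (ns_Y m hm))
  refine ⟨H, ?_⟩
  unfold Lam
  refine csInf_le ⟨0, ?_⟩ ⟨_, H⟩
  rintro l ⟨Y, hY, htr, -⟩
  have i0 : Fin m := ⟨0, by omega⟩
  have e := congrFun (congrFun htr (i0, i0)) (i0, i0)
  have hnn : (0 : ℂ) ≤ trA1B1 Y (i0, i0) (i0, i0) := by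
    refine Finset.sum_nonneg fun a _ => Finset.sum_nonneg fun b _ => ?_
    have h1 := Matrix.PosSemidef.diag_nonneg hY (i := (i0, a, i0, b))
    rw [Matrix.sub_apply] at h1
    have h2 : (0 : ℂ) ≤ upsChoi m (i0, a, i0, b) (i0, a, i0, b) := by
      simp only [upsChoi, classChoi]
      refine mul_nonneg ?_ ?_ <;> split_ifs <;> simp
    exact h2.trans (sub_nonneg.1 h1)
  rw [e] at hnn
  simpa using hnn
end
end

section
/- Additivity of the channel's bipartite conditional min-entropy: let K₁, indexed by A₀ × B₀ × B₁, and K₂, indexed by A₀' × B₀' × B₁', be positive semidefinite matrices with Tr_{B₁} K₁ = I_{A₀B₀} and Tr_{B₁'} K₂ = I_{A₀'B₀'} (i.e. each K_i = Tr over the A-output of the Choi matrix of a bipartite channel). Then μ(K₁ ⊠ K₂) = μ(K₁) · μ(K₂), where K₁ ⊠ K₂ is the Kronecker product reindexed to (A₀ × A₀') × (B₀ × B₀') × (B₁ × B₁'). Equivalently, the bipartite conditional min-entropy H_min(𝐀|𝐁) = −log μ is additive under tensor products of bipartite channels. -/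
open Matrix
open scoped ComplexOrder

noncomputable section

/-- The optimal value `μ(K)` of the SDP whose negative logarithm is the bipartite
conditional min-entropy `H_min(𝐀|𝐁)` (for `K = Tr_{A₁} J` of a channel Choi matrix `J`). -/
def mu {A₀ B₀ B₁ : Type*} [Fintype A₀] [Fintype B₀] [Fintype B₁]
    [DecidableEq A₀] [DecidableEq B₀]
    (K : Matrix (A₀ × B₀ × B₁) (A₀ × B₀ × B₁) ℂ) : ℝ :=
  sInf {m : ℝ | ∃ X : Matrix (B₀ × B₁) (B₀ × B₁) ℂ,
    trOut X = m • (1 : Matrix B₀ B₀ ℂ) ∧ LoewnerLE K (idFst X)}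

/-- `Tr_{B₁}` of a matrix on `A₀ × B₀ × B₁`. -/
def trLast3 {A₀ B₀ B₁ : Type*} [Fintype B₁]
    (K : Matrix (A₀ × B₀ × B₁) (A₀ × B₀ × B₁) ℂ) : Matrix (A₀ × B₀) (A₀ × B₀) ℂ :=
  fun x y => ∑ b : B₁, K (x.1, x.2, b) (y.1, y.2, b)

/-- Kronecker product of matrices on three-fold systems, reindexed to
`(A₀ × A₀') × (B₀ × B₀') × (B₁ × B₁')`. -/
def kron3 {A₀ B₀ B₁ A₀' B₀' B₁' : Type*}
    (K₁ : Matrix (A₀ × B₀ × B₁) (A₀ × B₀ × B₁) ℂ)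
    (K₂ : Matrix (A₀' × B₀' × B₁') (A₀' × B₀' × B₁') ℂ) :
    Matrix ((A₀ × A₀') × (B₀ × B₀') × (B₁ × B₁'))
      ((A₀ × A₀') × (B₀ × B₀') × (B₁ × B₁')) ℂ :=
  fun x y =>
    K₁ (x.1.1, x.2.1.1, x.2.2.1) (y.1.1, y.2.1.1, y.2.2.1) *
    K₂ (x.1.2, x.2.1.2, x.2.2.2) (y.1.2, y.2.1.2, y.2.2.2)

section Helpers

variable {A B C : Type*} [Fintype A] [Fintype B] [Fintype C]
  [DecidableEq A] [DecidableEq B] [DecidableEq C]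

/-- feasible set -/
def feas (K : Matrix (A × B × C) (A × B × C) ℂ) : Set ℝ :=
  {m : ℝ | ∃ X : Matrix (B × C) (B × C) ℂ,
    trOut X = m • (1 : Matrix B B ℂ) ∧ LoewnerLE K (idFst X)}

lemma mu_eq (K : Matrix (A × B × C) (A × B × C) ℂ) : mu K = sInf (feas K) := rfl

lemma trace_idFst (X : Matrix (B × C) (B × C) ℂ) :
    (idFst X : Matrix (A × B × C) (A × B × C) ℂ).trace = Fintype.card A * (trOut X).trace := by
  simp [Matrix.trace, idFst, trOut, Fintype.sum_prod_type]

lemma feas_bound {K : Matrix (A × B × C) (A × B × C) ℂ} {m : ℝ} (h : m ∈ feas K) :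
    K.trace.re ≤ (Fintype.card A * Fintype.card B : ℝ) * m := by
  obtain ⟨X, hX, hK⟩ := h
  have := hK.trace_nonneg
  rw [Matrix.trace_sub, trace_idFst, hX] at this
  have := (Complex.le_def.1 this).1
  simp at this
  nlinarith

lemma feas_bdd [Nonempty A] [Nonempty B] (K : Matrix (A × B × C) (A × B × C) ℂ) :
    BddBelow (feas K) := by
  refine ⟨K.trace.re / (Fintype.card A * Fintype.card B : ℝ), fun m hm => ?_⟩
  have h0 : (0:ℝ) < (Fintype.card A * Fintype.card B : ℝ) := by
    have := Fintype.card_pos (α := A)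
    have := Fintype.card_pos (α := B)
    positivity
  rw [div_le_iff₀ h0]
  linarith [feas_bound hm]

open scoped MatrixOrder Matrix.Norms.L2Operator in
lemma herm_le {n : Type*} [Fintype n] [DecidableEq n] (Y : Matrix n n ℂ) (hY : Y.IsHermitian) :
    ∃ c : ℝ, (c • (1 : Matrix n n ℂ) - Y).PosSemidef := by
  refine ⟨‖Y‖, ?_⟩
  have h := IsSelfAdjoint.le_algebraMap_norm_self (a := Y) hY
  rw [Matrix.le_iff, Algebra.algebraMap_eq_smul_one] at h
  exact h

lemma feas_nonempty (K : Matrix (A × B × C) (A × B × C) ℂ) (hK : K.IsHermitian) :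
    (feas K).Nonempty := by
  obtain ⟨c, hc⟩ := herm_le K hK
  refine ⟨Fintype.card C * c, c • 1, ?_, ?_⟩
  · ext i j
    simp [trOut, Matrix.one_apply]
  · have : (idFst (c • 1 : Matrix (B × C) (B × C) ℂ) : Matrix (A × B × C) (A × B × C) ℂ)
        = c • 1 := by
      ext i j
      rcases i with ⟨a, b⟩
      rcases j with ⟨a', b'⟩
      simp only [idFst, Matrix.smul_apply, Matrix.one_apply, Prod.mk.injEq]
      by_cases h : a = a' <;> simp [h]
    unfold LoewnerLE
    rw [this]
    exact hc

lemma feas_add {K L : Matrix (A × B × C) (A × B × C) ℂ} {m l : ℝ} (h : m ∈ feas K)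
    (h' : l ∈ feas L) : m + l ∈ feas (K + L) := by
  obtain ⟨X, hX, hK⟩ := h
  obtain ⟨Y, hY, hL⟩ := h'
  refine ⟨X + Y, ?_, ?_⟩
  · rw [add_smul, ← hX, ← hY]
    ext i j
    simp [trOut, Finset.sum_add_distrib]
  · have := hK.add hL
    unfold LoewnerLE
    convert this using 1
    ext i j
    by_cases hij : i.1 = j.1 <;> simp [idFst, hij] <;> ring

lemma feas_smul {K : Matrix (A × B × C) (A × B × C) ℂ} {m : ℝ} (c : ℝ) (hc : 0 ≤ c)
    (h : m ∈ feas K) : c * m ∈ feas (c • K) := by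
  obtain ⟨X, hX, hK⟩ := h
  refine ⟨c • X, ?_, ?_⟩
  · rw [mul_smul, ← hX]
    ext i j
    simp [trOut, Finset.mul_sum]
  · have := hK.smul hc
    unfold LoewnerLE
    convert this using 1
    ext i j
    by_cases hij : i.1 = j.1 <;> simp [idFst, hij] <;> ring

variable [Nonempty A] [Nonempty B]

lemma mu_le {K : Matrix (A × B × C) (A × B × C) ℂ} {m : ℝ} (h : m ∈ feas K) : mu K ≤ m :=
  csInf_le (feas_bdd K) h

lemma le_mu {K : Matrix (A × B × C) (A × B × C) ℂ} (hK : K.IsHermitian) {c : ℝ}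
    (h : ∀ m ∈ feas K, c ≤ m) : c ≤ mu K :=
  le_csInf (feas_nonempty K hK) h

lemma mu_add_le {K L : Matrix (A × B × C) (A × B × C) ℂ} (hK : K.IsHermitian)
    (hL : L.IsHermitian) : mu (K + L) ≤ mu K + mu L := by
  rw [← sub_le_iff_le_add]
  refine le_mu hK fun m hm => ?_
  rw [sub_le_comm]
  refine le_mu hL fun l hl => ?_
  linarith [mu_le (feas_add hm hl)]

lemma herm_smul {n : Type*} {K : Matrix n n ℂ} (hK : K.IsHermitian) (c : ℝ) :
    (c • K).IsHermitian := by
  unfold Matrix.IsHermitian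
  rw [Matrix.conjTranspose_smul, hK.eq]; simp

lemma mu_smul_le {K : Matrix (A × B × C) (A × B × C) ℂ} (hK : K.IsHermitian) (c : ℝ)
    (hc : 0 < c) : mu (c • K) ≤ c * mu K := by
  rw [← div_le_iff₀' hc]
  refine le_mu hK fun m hm => ?_
  rw [div_le_iff₀' hc]
  exact mu_le (feas_smul c hc.le hm)

lemma mu_smul {K : Matrix (A × B × C) (A × B × C) ℂ} (hK : K.IsHermitian) (c : ℝ)
    (hc : 0 < c) : mu (c • K) = c * mu K := by
  refine le_antisymm (mu_smul_le hK c hc) ?_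
  have := mu_smul_le (herm_smul hK c) c⁻¹ (inv_pos.2 hc)
  rw [smul_smul, inv_mul_cancel₀ hc.ne', one_smul] at this
  rwa [← div_eq_inv_mul, le_div_iff₀' hc] at this

lemma mu_zero : mu (0 : Matrix (A × B × C) (A × B × C) ℂ) = 0 := by
  have h := mu_smul (K := (0 : Matrix (A × B × C) (A × B × C) ℂ)) (by simp) 2 (by norm_num)
  rw [smul_zero] at h
  linarith

lemma mu_neg_psd {P : Matrix (A × B × C) (A × B × C) ℂ} (hP : P.PosSemidef) : mu (-P) ≤ 0 := by
  refine mu_le ⟨0, ?_, ?_⟩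
  · ext i j
    simp [trOut]
  · unfold LoewnerLE
    convert hP using 1
    ext i j
    simp [idFst]

lemma mu_idFst_le (Z : Matrix (B × C) (B × C) ℂ) (m : ℝ) (h : trOut Z = m • (1 : Matrix B B ℂ)) :
    mu (idFst Z : Matrix (A × B × C) (A × B × C) ℂ) ≤ m := by
  refine mu_le ⟨Z, h, ?_⟩
  unfold LoewnerLE
  rw [sub_self]
  exact Matrix.PosSemidef.zero

/-- Hermitian part -/
def hermPart {n : Type*} (Y : Matrix n n ℂ) : Matrix n n ℂ := (1 / 2 : ℝ) • (Y + Yᴴ)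

lemma hermPart_isHermitian {n : Type*} (Y : Matrix n n ℂ) : (hermPart Y).IsHermitian := by
  apply herm_smul
  unfold Matrix.IsHermitian
  rw [Matrix.conjTranspose_add, Matrix.conjTranspose_conjTranspose, add_comm]

lemma hermPart_of {n : Type*} {Y : Matrix n n ℂ} (h : Y.IsHermitian) : hermPart Y = Y := by
  unfold hermPart
  rw [h.eq, ← two_smul ℝ Y, smul_smul]
  norm_num

lemma hermPart_add {n : Type*} (X Y : Matrix n n ℂ) :
    hermPart (X + Y) = hermPart X + hermPart Y := by
  unfold hermPart
  rw [Matrix.conjTranspose_add, ← smul_add]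
  congr 1
  abel

lemma hermPart_smul {n : Type*} (c : ℝ) (Y : Matrix n n ℂ) :
    hermPart (c • Y) = c • hermPart Y := by
  unfold hermPart
  rw [Matrix.conjTranspose_smul, smul_comm c, smul_add c]
  simp

lemma exists_real_dual (K : Matrix (A × B × C) (A × B × C) ℂ) (hK : K.IsHermitian) (h0 : K ≠ 0) :
    ∃ g : Matrix (A × B × C) (A × B × C) ℂ →ₗ[ℝ] ℝ, g K = mu K ∧
      ∀ Y, g Y ≤ mu (hermPart Y) := by
  obtain ⟨g, hg, hN⟩ := exists_extension_of_le_sublinear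
    (LinearPMap.mkSpanSingleton (σ := RingHom.id ℝ) K (mu K) h0) (fun Y => mu (hermPart Y))
    (fun c hc Y => by
      simp only [hermPart_smul]
      exact mu_smul (hermPart_isHermitian Y) c hc)
    (fun X Y => by
      simp only [hermPart_add]
      exact mu_add_le (hermPart_isHermitian X) (hermPart_isHermitian Y))
    (by
      rintro ⟨x, hx⟩
      obtain ⟨c, rfl⟩ := Submodule.mem_span_singleton.1 hx
      rw [LinearPMap.mkSpanSingleton'_apply]
      simp only [hermPart_smul, hermPart_of hK, RingHom.id_apply, smul_eq_mul]
      rcases lt_trichotomy c 0 with h | h | h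
      · have h1 := mu_smul hK (-c) (by linarith)
        have h2 := mu_add_le (herm_smul hK c) (herm_smul hK (-c))
        rw [← add_smul, add_neg_cancel, zero_smul, mu_zero] at h2
        linarith
      · simp [h, mu_zero]
      · exact (mu_smul hK c h).ge)
  refine ⟨g, ?_, hN⟩
  have hm : K ∈ (ℝ ∙ K) := Submodule.mem_span_singleton_self K
  have := hg ⟨K, hm⟩
  exact this.trans (LinearPMap.mkSpanSingleton'_apply_self _ _ _ _)

lemma exists_dual (K : Matrix (A × B × C) (A × B × C) ℂ) (hK : K.IsHermitian) (h0 : K ≠ 0) :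
    ∃ G : Matrix (A × B × C) (A × B × C) ℂ →ₗ[ℂ] ℂ, G K = (mu K : ℂ) ∧
      (∀ Y, G Yᴴ = star (G Y)) ∧ (∀ P, P.PosSemidef → 0 ≤ G P) ∧
      (∀ Z t, trOut Z = t • (1 : Matrix B B ℂ) → G (idFst Z) = t) := by
  obtain ⟨g, hgK, hg⟩ := exists_real_dual K hK h0
  have hskew : ∀ Y, Yᴴ = -Y → g Y = 0 := by
    intro Y hY
    have h1 := hg Y
    have h2 := hg (-Y)
    have e1 : hermPart Y = 0 := by simp [hermPart, hY]
    have e2 : hermPart (-Y) = 0 := by simp [hermPart, hY]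
    rw [e1, mu_zero] at h1
    rw [e2, mu_zero, map_neg] at h2
    linarith
  have hstar : ∀ Y, g Yᴴ = g Y := by
    intro Y
    have := hskew (Y - Yᴴ) (by simp)
    rw [map_sub] at this
    linarith
  have hherm : ∀ Y, Y.IsHermitian → g (Complex.I • Y) = 0 := by
    intro Y hY
    apply hskew
    rw [Matrix.conjTranspose_smul, hY.eq]
    simp
  have hpos : ∀ P, P.PosSemidef → 0 ≤ g P := by
    intro P hP
    have h1 := hg (-P)
    rw [hermPart_of hP.1.neg, map_neg] at h1
    linarith [mu_neg_psd hP]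
  have hid1 : ∀ Z (t : ℂ), trOut Z = t • (1 : Matrix B B ℂ) → g (idFst Z) ≤ t.re := by
    intro Z t h
    refine (hg _).trans ?_
    have e : hermPart (idFst Z : Matrix (A × B × C) (A × B × C) ℂ) = idFst (hermPart Z) := by
      ext i j
      by_cases hij : i.1 = j.1
      · simp [hermPart, idFst, hij]
      · simp [hermPart, idFst, hij, Ne.symm hij]
    rw [e]
    apply mu_idFst_le
    have e2 : trOut (hermPart Z) = hermPart (trOut Z) := by
      ext i j
      simp [trOut, hermPart, Finset.sum_add_distrib, Finset.mul_sum]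
    rw [e2, h]
    ext i j
    by_cases hij : i = j
    · subst hij
      simp [hermPart, Complex.add_conj]
    · simp [hermPart, hij, Ne.symm hij]
  have hid : ∀ Z (t : ℂ), trOut Z = t • (1 : Matrix B B ℂ) → g (idFst Z) = t.re := by
    intro Z t h
    refine le_antisymm (hid1 Z t h) ?_
    have h1 := hid1 (-Z) (-t) (by
      rw [neg_smul, ← h]; ext i j; simp [trOut])
    have e : (idFst (-Z) : Matrix (A × B × C) (A × B × C) ℂ) = -idFst Z := by
      ext i j; simp [idFst]
    rw [e, map_neg, Complex.neg_re] at h1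
    linarith
  have hre : ∀ Y, (Module.Dual.extendRCLike (𝕜 := ℂ) g Y).re = g Y := fun Y =>
    Module.Dual.re_extendRCLike_apply (𝕜 := ℂ) g Y
  have him : ∀ Y, (Module.Dual.extendRCLike (𝕜 := ℂ) g Y).im = -g (Complex.I • Y) := fun Y =>
    Module.Dual.im_extendRCLike_apply (𝕜 := ℂ) g Y
  refine ⟨Module.Dual.extendRCLike (𝕜 := ℂ) g, ?_, ?_, ?_, ?_⟩
  · apply Complex.ext
    · rw [hre, hgK, Complex.ofReal_re]
    · rw [him, hherm K hK, Complex.ofReal_im, neg_zero]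
  · intro Y
    apply Complex.ext
    · rw [hre, Complex.star_def, Complex.conj_re, hre, hstar]
    · rw [him, Complex.star_def, Complex.conj_im, him, ← hstar (Complex.I • Y),
        Matrix.conjTranspose_smul]
      simp
  · intro P hP
    rw [Complex.le_def, hre, him, hherm P hP.1]
    simpa using hpos P hP
  · intro Z t h
    apply Complex.ext
    · rw [hre, hid Z t h]
    · have e : (Complex.I • idFst Z : Matrix (A × B × C) (A × B × C) ℂ) = idFst (Complex.I • Z) := by
        ext i j; simp [idFst]
      rw [him, e, hid (Complex.I • Z) (Complex.I * t)]
      · simp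
      · rw [mul_smul, ← h]; ext i j; simp [trOut, Finset.mul_sum]

end Helpers

lemma psd_map {n k : Type*} [Fintype n] [Fintype k] [DecidableEq n] [DecidableEq k]
    (G : Matrix n n ℂ →ₗ[ℂ] ℂ)
    (hs : ∀ Y, G Yᴴ = star (G Y)) (hG : ∀ P, P.PosSemidef → 0 ≤ G P)
    (P : Matrix (n × k) (n × k) ℂ) (hP : P.PosSemidef) :
    (Matrix.of fun i j => G (P.submatrix (fun a => (a, i)) (fun b => (b, j))) :
      Matrix k k ℂ).PosSemidef := by
  refine .of_dotProduct_mulVec_nonneg ?_ fun x => ?_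
  · ext i j
    rw [Matrix.conjTranspose_apply, Matrix.of_apply, Matrix.of_apply, ← hs,
      Matrix.conjTranspose_submatrix, hP.1.eq]
  · let V : Matrix (n × k) n ℂ := Matrix.of fun p b => if p.1 = b then x p.2 else 0
    have hV := hG _ (hP.conjTranspose_mul_mul_same V)
    convert hV using 1
    have e : Vᴴ * P * V = ∑ i, ∑ j, (star (x i) * x j) •
        P.submatrix (fun a => (a, i)) (fun b => (b, j)) := by
      ext a b
      simp only [Matrix.mul_apply, Matrix.conjTranspose_apply, V, Fintype.sum_prod_type,
        Matrix.sum_apply, Matrix.smul_apply, smul_eq_mul, apply_ite star, star_zero, ite_mul,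
        zero_mul, mul_ite, mul_zero, Finset.sum_mul, Matrix.of_apply, Matrix.submatrix_apply]
      rw [Finset.sum_comm]
      simp
      rw [Finset.sum_comm]
      refine Finset.sum_congr rfl fun i _ => Finset.sum_congr rfl fun j _ => ?_
      ring
    rw [e]
    simp only [map_sum, map_smul, dotProduct, mulVec, Finset.mul_sum, Pi.star_apply, smul_eq_mul,
      Matrix.of_apply]
    refine Finset.sum_congr rfl fun i _ => Finset.sum_congr rfl fun j _ => ?_
    ring

lemma kron3_psd {A₀ B₀ B₁ A₀' B₀' B₁' : Type*}
    [Fintype A₀] [Fintype B₀] [Fintype B₁] [Fintype A₀'] [Fintype B₀'] [Fintype B₁']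
    [DecidableEq A₀] [DecidableEq B₀] [DecidableEq B₁]
    [DecidableEq A₀'] [DecidableEq B₀'] [DecidableEq B₁']
    {K₁ : Matrix (A₀ × B₀ × B₁) (A₀ × B₀ × B₁) ℂ}
    {K₂ : Matrix (A₀' × B₀' × B₁') (A₀' × B₀' × B₁') ℂ}
    (h₁ : K₁.PosSemidef) (h₂ : K₂.PosSemidef) : (kron3 K₁ K₂).PosSemidef :=
  (h₁.kronecker h₂).submatrix
    (fun x : (A₀ × A₀') × (B₀ × B₀') × (B₁ × B₁') =>
      ((x.1.1, x.2.1.1, x.2.2.1), (x.1.2, x.2.1.2, x.2.2.2)))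

lemma feas_kron {A₀ B₀ B₁ A₀' B₀' B₁' : Type*}
    [Fintype A₀] [Fintype B₀] [Fintype B₁] [Fintype A₀'] [Fintype B₀'] [Fintype B₁']
    [DecidableEq A₀] [DecidableEq B₀] [DecidableEq B₁]
    [DecidableEq A₀'] [DecidableEq B₀'] [DecidableEq B₁']
    {K₁ : Matrix (A₀ × B₀ × B₁) (A₀ × B₀ × B₁) ℂ}
    {K₂ : Matrix (A₀' × B₀' × B₁') (A₀' × B₀' × B₁') ℂ}
    (h₁ : K₁.PosSemidef) (h₂ : K₂.PosSemidef) {m₁ m₂ : ℝ} (hm₁ : m₁ ∈ feas K₁)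
    (hm₂ : m₂ ∈ feas K₂) : m₁ * m₂ ∈ feas (kron3 K₁ K₂) := by
  obtain ⟨X, hX, hK⟩ := hm₁
  obtain ⟨Y, hY, hL⟩ := hm₂
  refine ⟨fun x y => X (x.1.1, x.2.1) (y.1.1, y.2.1) * Y (x.1.2, x.2.2) (y.1.2, y.2.2), ?_, ?_⟩
  · ext ⟨i, i'⟩ ⟨j, j'⟩
    have e1 := congrFun (congrFun hX i) j
    have e2 := congrFun (congrFun hY i') j'
    simp only [trOut] at e1 e2
    simp only [trOut, Fintype.sum_prod_type]
    rw [← Finset.sum_mul_sum, e1, e2]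
    by_cases h : i = j <;> by_cases h' : i' = j' <;> simp [h, h', Matrix.one_apply]
  · unfold LoewnerLE at *
    have hYp : (idFst Y : Matrix (A₀' × B₀' × B₁') (A₀' × B₀' × B₁') ℂ).PosSemidef := by
      simpa using hL.add h₂
    convert (kron3_psd hK hYp).add (kron3_psd h₁ hL) using 1
    ext ⟨⟨a, a'⟩, x⟩ ⟨⟨c, c'⟩, y⟩
    by_cases h : a = c <;> by_cases h' : a' = c' <;> simp [kron3, idFst, h, h'] <;> ring

lemma feas_contract {A₀ B₀ B₁ A₀' B₀' B₁' : Type*}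
    [Fintype A₀] [Fintype B₀] [Fintype B₁] [Fintype A₀'] [Fintype B₀'] [Fintype B₁']
    [DecidableEq A₀] [DecidableEq B₀] [DecidableEq B₁]
    [DecidableEq A₀'] [DecidableEq B₀'] [DecidableEq B₁']
    [Nonempty A₀] [Nonempty B₀]
    {K₁ : Matrix (A₀ × B₀ × B₁) (A₀ × B₀ × B₁) ℂ}
    {K₂ : Matrix (A₀' × B₀' × B₁') (A₀' × B₀' × B₁') ℂ}
    (h₁ : K₁.IsHermitian) (h0 : K₁ ≠ 0) {m : ℝ} (hm : m ∈ feas (kron3 K₁ K₂)) :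
    m ∈ feas (mu K₁ • K₂) := by
  obtain ⟨G, hGK, hGs, hGp, hGi⟩ := exists_dual K₁ h₁ h0
  obtain ⟨X, hX, hK⟩ := hm
  let Z : (B₀' × B₁') → (B₀' × B₁') → Matrix (B₀ × B₁) (B₀ × B₁) ℂ := fun i j =>
    X.submatrix (fun b => ((b.1, i.1), (b.2, i.2))) (fun c => ((c.1, j.1), (c.2, j.2)))
  refine ⟨Matrix.of fun i j => G (idFst (Z i j)), ?_, ?_⟩
  · ext i j
    simp only [trOut, Matrix.of_apply]
    rw [← map_sum]
    have e : (∑ t, idFst (Z (i, t) (j, t)) : Matrix (A₀ × B₀ × B₁) (A₀ × B₀ × B₁) ℂ)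
        = idFst (∑ t, Z (i, t) (j, t)) := by
      ext x y
      simp [Matrix.sum_apply, idFst, Finset.mul_sum]
    rw [e]
    apply hGi
    ext b c
    have := congrFun (congrFun hX (b, i)) (c, j)
    simp only [trOut, Fintype.sum_prod_type] at this
    simp only [trOut, Matrix.sum_apply, Z, Matrix.submatrix_apply]
    rw [this]
    by_cases h : i = j <;> by_cases h' : b = c <;> simp [h, h', Matrix.one_apply]
  · unfold LoewnerLE at *
    have := psd_map G hGs hGp _ (hK.submatrix
      (fun p : (A₀ × B₀ × B₁) × (A₀' × B₀' × B₁') =>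
        ((p.1.1, p.2.1), (p.1.2.1, p.2.2.1), (p.1.2.2, p.2.2.2))))
    convert this using 1
    ext ⟨a, i⟩ ⟨c, j⟩
    rw [Matrix.of_apply, Matrix.submatrix_submatrix]
    have e : ((idFst X : Matrix ((A₀ × A₀') × (B₀ × B₀') × (B₁ × B₁'))
          ((A₀ × A₀') × (B₀ × B₀') × (B₁ × B₁')) ℂ) - kron3 K₁ K₂).submatrix
        ((fun p : (A₀ × B₀ × B₁) × (A₀' × B₀' × B₁') =>
        ((p.1.1, p.2.1), (p.1.2.1, p.2.2.1), (p.1.2.2, p.2.2.2))) ∘ (fun x => (x, (a, i))))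
        ((fun p : (A₀ × B₀ × B₁) × (A₀' × B₀' × B₁') =>
        ((p.1.1, p.2.1), (p.1.2.1, p.2.2.1), (p.1.2.2, p.2.2.2))) ∘ (fun x => (x, (c, j))))
        = (if a = c then (1:ℂ) else 0) • idFst (Z i j) - (K₂ (a, i) (c, j)) • K₁ := by
      ext ⟨x, x'⟩ ⟨y, y'⟩
      by_cases h : a = c <;> by_cases h' : x = y <;> simp [kron3, idFst, h, h', Z] <;> ring
    rw [e, map_sub, map_smul, map_smul, hGK]
    simp [idFst]
    ring

lemma trace_of_TP {A B C : Type*} [Fintype A] [Fintype B] [Fintype C]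
    [DecidableEq A] [DecidableEq B] 
    (K : Matrix (A × B × C) (A × B × C) ℂ) (h : trLast3 K = 1) :
    K.trace.re = Fintype.card A * Fintype.card B := by
  have e : K.trace = (trLast3 K).trace := by
    simp [Matrix.trace, trLast3, Fintype.sum_prod_type]
  rw [e, h]
  simp

lemma one_le_of_feas {A B C : Type*} [Fintype A] [Fintype B] [Fintype C]
    [DecidableEq A] [DecidableEq B] [DecidableEq C] [Nonempty A] [Nonempty B]
    {K : Matrix (A × B × C) (A × B × C) ℂ} (h : trLast3 K = 1) {m : ℝ} (hm : m ∈ feas K) :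
    1 ≤ m := by
  have h1 := feas_bound hm
  rw [trace_of_TP K h] at h1
  have h0 : (0:ℝ) < (Fintype.card A * Fintype.card B : ℝ) := by
    have := Fintype.card_pos (α := A)
    have := Fintype.card_pos (α := B)
    positivity
  exact le_of_mul_le_mul_left (by linarith) h0

/-- Additivity of the channel's bipartite conditional min-entropy: for `K₁, K₂` arising
from bipartite channels (positive semidefinite with `Tr_{B₁} Kᵢ = I`),
`μ(K₁ ⊠ K₂) = μ(K₁) · μ(K₂)`; equivalently `H_min(𝐀|𝐁) = −log μ` is additive under
tensor products of bipartite channels. -/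
theorem mu_additive
    {A₀ B₀ B₁ A₀' B₀' B₁' : Type*}
    [Fintype A₀] [Fintype B₀] [Fintype B₁] [Fintype A₀'] [Fintype B₀'] [Fintype B₁']
    [DecidableEq A₀] [DecidableEq B₀] [DecidableEq B₁]
    [DecidableEq A₀'] [DecidableEq B₀'] [DecidableEq B₁']
    [Nonempty A₀] [Nonempty B₀] [Nonempty B₁] [Nonempty A₀'] [Nonempty B₀'] [Nonempty B₁']
    (K₁ : Matrix (A₀ × B₀ × B₁) (A₀ × B₀ × B₁) ℂ)
    (K₂ : Matrix (A₀' × B₀' × B₁') (A₀' × B₀' × B₁') ℂ)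
    (h₁ : K₁.PosSemidef) (hTP₁ : trLast3 K₁ = 1)
    (h₂ : K₂.PosSemidef) (hTP₂ : trLast3 K₂ = 1) :
    mu (kron3 K₁ K₂) = mu K₁ * mu K₂ := by
  have hmu₁ : 1 ≤ mu K₁ := le_mu h₁.1 fun m hm => one_le_of_feas hTP₁ hm
  have hpos : 0 < mu K₁ := by linarith
  have h0 : K₁ ≠ 0 := by
    rintro rfl
    rw [mu_zero] at hpos
    exact lt_irrefl _ hpos
  apply le_antisymm
  · rw [← div_le_iff₀' hpos]
    refine le_mu h₂.1 fun m₂ hm₂ => ?_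
    have hm₂' := one_le_of_feas hTP₂ hm₂
    rw [div_le_iff₀' hpos, ← div_le_iff₀ (by linarith)]
    refine le_mu h₁.1 fun m₁ hm₁ => ?_
    rw [div_le_iff₀ (by linarith)]
    exact mu_le (feas_kron h₁ h₂ hm₁ hm₂)
  · rw [← mu_smul h₂.1 _ hpos]
    exact le_mu (kron3_psd h₁ h₂).1 fun m hm => mu_le (feas_contract h₁.1 h0 hm)
end
end

section
/- Reduction of the one-shot exact bidirectional simulation-cost SDP to the Duan–Winter point-to-point formula when Alice's output and Bob's input are trivial: let A₀ and B₁ be finite nonempty types and J ∈ Matrix ((A₀ × B₁)) ((A₀ × B₁)) ℂ positive semidefinite with Tr_{B₁} J = I_{A₀}. Then sInf {c : ℝ | ∃ (m : ℝ) (V W X : Matrix ((A₀ × B₁)) ((A₀ × B₁)) ℂ), c = ⌈m⌉ ∧ J ≤ V ∧ J ≤ W ∧ J ≤ X ∧ X = π_{A₀} ⊗ Tr_{A₀} X ∧ m • J = W ∧ X = V ∧ Tr_{B₁} V = m • I_{A₀} ∧ Tr_{B₁} X = Tr_{B₁} W} = ⌈ sInf { (Matrix.trace X').re | X' : Matrix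 B₁ B₁ ℂ, J ≤ I_{A₀} ⊗ X' } ⌉, i.e. the one-shot exact non-signalling-assisted simulation cost SDP with trivial systems A₁ and B₀ equals log ⌈ 2^{−H_min(A|B)_J} ⌉ with H_min the conditional min-entropy of the point-to-point channel. -/
open Matrix
open scoped ComplexOrder

noncomputable section

open scoped MatrixOrder Matrix.Norms.L2Operator in
theorem exists_le_smul_aux {n : Type*} [Fintype n] [DecidableEq n] (J : Matrix n n ℂ)
    (hJ : J.PosSemidef) :
    ∃ c : ℝ, (((c : ℂ) • (1 : Matrix n n ℂ)) - J).PosSemidef := by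
  refine ⟨‖J‖, ?_⟩
  have h : J ≤ algebraMap ℝ (Matrix n n ℂ) ‖J‖ :=
    IsSelfAdjoint.le_algebraMap_norm_self (a := J) hJ.1
  have h2 : (algebraMap ℝ (Matrix n n ℂ) ‖J‖ - J).PosSemidef := h
  have e : ((‖J‖ : ℝ) : ℂ) • (1 : Matrix n n ℂ) = algebraMap ℝ (Matrix n n ℂ) ‖J‖ := by
    ext i j
    simp [Matrix.algebraMap_matrix_apply, Matrix.one_apply]
  rw [e]
  exact h2

open scoped MatrixOrder Matrix.Norms.L2Operator in
theorem psd_factor_aux {n : Type*} [Fintype n] [DecidableEq n] (M : Matrix n n ℂ)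
    (hM : M.PosSemidef) : ∃ B : Matrix n n ℂ, M = Bᴴ * B := by
  have h : 0 ≤ M := hM.nonneg
  exact CStarAlgebra.nonneg_iff_eq_star_mul_self.mp h

theorem psd_entry_bound {n : Type*} [Fintype n] [DecidableEq n] (M : Matrix n n ℂ)
    (hM : M.PosSemidef) (i j : n) : ‖M i j‖ ≤ (Matrix.trace M).re := by
  obtain ⟨B, rfl⟩ := psd_factor_aux M hM
  have htr : (Matrix.trace (Bᴴ * B)).re = ∑ k, ∑ l, ‖B k l‖ ^ 2 := by
    rw [Finset.sum_comm]
    simp only [Matrix.trace, Matrix.diag_apply, Matrix.mul_apply, Matrix.conjTranspose_apply,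
      Complex.re_sum]
    refine Finset.sum_congr rfl fun x _ => Finset.sum_congr rfl fun k _ => ?_
    rw [Complex.sq_norm, Complex.normSq_apply]
    simp
  rw [htr, Matrix.mul_apply]
  refine (norm_sum_le _ _).trans (Finset.sum_le_sum fun k _ => ?_)
  rw [norm_mul, Matrix.conjTranspose_apply, norm_star]
  have h1 : ‖B k i‖ ^ 2 ≤ ∑ l, ‖B k l‖ ^ 2 :=
    Finset.single_le_sum (f := fun l => ‖B k l‖ ^ 2) (fun _ _ => by positivity)
      (Finset.mem_univ i)
  have h2 : ‖B k j‖ ^ 2 ≤ ∑ l, ‖B k l‖ ^ 2 :=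
    Finset.single_le_sum (f := fun l => ‖B k l‖ ^ 2) (fun _ _ => by positivity)
      (Finset.mem_univ j)
  nlinarith [sq_nonneg (‖B k i‖ - ‖B k j‖)]

theorem isClosed_psd_aux {n : Type*} [Fintype n] :
    IsClosed {M : Matrix n n ℂ | M.PosSemidef} := by
  simp only [Matrix.posSemidef_iff_dotProduct_mulVec, Set.ofPred_and, Set.ofPred_forall]
  refine IsClosed.inter ?_ (isClosed_iInter fun x => ?_)
  · exact isClosed_eq (by fun_prop) (by fun_prop)
  · exact isClosed_le (by fun_prop) (by fun_prop)

theorem feas_psd {A B : Type*} [Fintype A] [Fintype B] [DecidableEq A] [DecidableEq B]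
    [Nonempty A] {J : Matrix (A × B) (A × B) ℂ} (hJ : J.PosSemidef) {X : Matrix B B ℂ}
    (h : LoewnerLE J (idFst X)) : X.PosSemidef := by
  obtain ⟨a⟩ := ‹Nonempty A›
  have h2 : (idFst X : Matrix (A × B) (A × B) ℂ).PosSemidef := by
    simpa using PosSemidef.add h hJ
  have h3 := h2.submatrix (fun b : B => (a, b))
  convert h3 using 1
  ext i j
  simp [idFst]

theorem feas_trace {A B : Type*} [Fintype A] [Fintype B] [DecidableEq A] [DecidableEq B]
    [Nonempty A] {J : Matrix (A × B) (A × B) ℂ} (hTP : trOut J = 1) {X : Matrix B B ℂ}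
    (h : LoewnerLE J (idFst X)) : 1 ≤ (Matrix.trace X).re := by
  obtain ⟨a⟩ := ‹Nonempty A›
  have h1 : (0 : ℂ) ≤ ∑ b : B, (idFst X - J : Matrix (A × B) (A × B) ℂ) (a, b) (a, b) :=
    Finset.sum_nonneg fun b _ => PosSemidef.diag_nonneg h
  have h2 : ∑ b : B, (idFst X - J : Matrix (A × B) (A × B) ℂ) (a, b) (a, b) = Matrix.trace X - 1 := by
    have h3 := congrFun (congrFun hTP a) a
    simp only [trOut, Matrix.one_apply_eq] at h3
    simp only [Matrix.sub_apply, Finset.sum_sub_distrib, h3]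
    simp [idFst, Matrix.trace]
  rw [h2] at h1
  have := (Complex.le_def.mp h1).1
  simpa using this

theorem isLeast_aux {A B : Type*} [Fintype A] [Fintype B] [DecidableEq A] [DecidableEq B]
    [Nonempty A] (J : Matrix (A × B) (A × B) ℂ) (hJ : J.PosSemidef) :
    ∃ r, IsLeast {r : ℝ | ∃ X' : Matrix B B ℂ,
          r = (Matrix.trace X').re ∧ LoewnerLE J (idFst X')} r := by
  obtain ⟨c, hc⟩ := exists_le_smul_aux J hJ
  have hX0 : LoewnerLE J (idFst ((c : ℂ) • (1 : Matrix B B ℂ))) := by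
    unfold LoewnerLE
    convert hc using 2
    ext ⟨a, b⟩ ⟨a', b'⟩
    by_cases h : a = a' <;> by_cases h' : b = b' <;> simp [idFst, Matrix.one_apply, h, h']
  set X0 : Matrix B B ℂ := (c : ℂ) • (1 : Matrix B B ℂ)
  let K : Set (Matrix B B ℂ) :=
    {X | LoewnerLE J (idFst X)} ∩ {X | (Matrix.trace X).re ≤ (Matrix.trace X0).re}
  have hcont : Continuous fun X : Matrix B B ℂ => (Matrix.trace X).re := by fun_prop
  have hKc : IsClosed K := by
    refine IsClosed.inter ?_ (isClosed_le hcont continuous_const)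
    refine isClosed_psd_aux.preimage (f := fun X : Matrix B B ℂ => idFst X - J) ?_
    refine continuous_pi fun x => continuous_pi fun y => ?_
    simp only [Matrix.sub_apply, idFst]
    fun_prop
  have hK : IsCompact K := by
    have hbig : IsCompact (Set.pi Set.univ fun _ : B => Set.pi Set.univ fun _ : B =>
        Metric.closedBall (0 : ℂ) (Matrix.trace X0).re) :=
      isCompact_univ_pi fun _ => isCompact_univ_pi fun _ => isCompact_closedBall _ _
    refine IsCompact.of_isClosed_subset hbig hKc ?_
    rintro X ⟨h1, h2⟩ i _ j _
    rw [mem_closedBall_zero_iff]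
    exact (psd_entry_bound X (feas_psd hJ h1) i j).trans h2
  obtain ⟨X, hXK, hmin⟩ := hK.exists_isMinOn ⟨X0, hX0, le_refl (Matrix.trace X0).re⟩
    hcont.continuousOn
  refine ⟨(Matrix.trace X).re, ⟨X, rfl, hXK.1⟩, ?_⟩
  rintro r ⟨Y, rfl, hY⟩
  by_cases h : (Matrix.trace Y).re ≤ (Matrix.trace X0).re
  · exact hmin ⟨hY, h⟩
  · exact hXK.2.trans (not_le.mp h).le

/-- Reduction of the one-shot exact bidirectional simulation-cost SDP to the Duan–Winter
point-to-point formula when Alice's output `A₁` and Bob's input `B₀` are trivial: the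
specialized SDP equals `⌈ 2^{−H_min(A|B)_J} ⌉`, i.e. the ceiling of the optimal value of
the conditional min-entropy SDP `min { Tr X' | J ≤ I_{A₀} ⊗ X' }`. -/
theorem one_shot_cost_reduces_to_duan_winter
    {A₀ B₁ : Type*} [Fintype A₀] [Fintype B₁] [DecidableEq A₀] [DecidableEq B₁]
    [Nonempty A₀] [Nonempty B₁]
    (J : Matrix (A₀ × B₁) (A₀ × B₁) ℂ)
    (hJ : J.PosSemidef) (hTP : trOut J = 1) :
    sInf {c : ℝ | ∃ (m : ℝ) (V W X : Matrix (A₀ × B₁) (A₀ × B₁) ℂ),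
        c = (⌈m⌉ : ℝ) ∧
        LoewnerLE J V ∧ LoewnerLE J W ∧ LoewnerLE J X ∧
        X = piFst (trInp X) ∧
        m • J = W ∧ X = V ∧
        trOut V = m • (1 : Matrix A₀ A₀ ℂ) ∧
        trOut X = trOut W} =
      (⌈sInf {r : ℝ | ∃ X' : Matrix B₁ B₁ ℂ,
          r = (Matrix.trace X').re ∧ LoewnerLE J (idFst X')}⌉ : ℝ) := by
  obtain ⟨r, hr⟩ := isLeast_aux J hJ
  rw [hr.csInf_eq]
  have hcard : (Fintype.card A₀ : ℂ) ≠ 0 := by simp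
  refine IsLeast.csInf_eq ⟨?_, ?_⟩
  · obtain ⟨⟨X', rfl, hX'⟩, -⟩ := hr
    have hpsd := feas_psd hJ hX'
    have h1 := feas_trace hTP hX'
    have htr : Matrix.trace X' = (((Matrix.trace X').re : ℝ) : ℂ) := by
      have := (Complex.le_def.mp hpsd.trace_nonneg).2
      apply Complex.ext <;> simp_all
    have hout : trOut (idFst X' : Matrix (A₀ × B₁) (A₀ × B₁) ℂ)
        = (Matrix.trace X').re • (1 : Matrix A₀ A₀ ℂ) := by
      ext a a'
      rw [Matrix.smul_apply, Complex.real_smul, ← htr]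
      by_cases h : a = a' <;> simp [trOut, idFst, Matrix.trace, Matrix.one_apply, h]
    refine ⟨(Matrix.trace X').re, idFst X', (Matrix.trace X').re • J, idFst X', rfl, hX', ?_,
      hX', ?_, rfl, rfl, hout, ?_⟩
    · unfold LoewnerLE
      have e : (Matrix.trace X').re • J - J = ((((Matrix.trace X').re - 1 : ℝ)) : ℂ) • J := by
        ext i j
        simp [sub_mul]
      rw [e]
      exact hJ.smul (by exact_mod_cast sub_nonneg.mpr h1)
    · ext x y
      simp only [piFst, trInp, idFst]
      by_cases h : x.1 = y.1 <;> simp [h, hcard]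
    · rw [hout, ← hTP]
      ext a a'
      simp [trOut, Finset.mul_sum]
  · rintro _ ⟨m, V, W, X, rfl, hV, hW, hX, hXpi, rfl, rfl, hVout, hXW⟩
    have key : m ∈ {r : ℝ | ∃ X' : Matrix B₁ B₁ ℂ,
          r = (Matrix.trace X').re ∧ LoewnerLE J (idFst X')} := by
      have e : X = idFst ((Fintype.card A₀ : ℂ)⁻¹ • trInp X) := by
        conv_lhs => rw [hXpi]
        ext x y
        simp only [piFst, idFst, Matrix.smul_apply, smul_eq_mul]
        ring
      refine ⟨(Fintype.card A₀ : ℂ)⁻¹ • trInp X, ?_, by rwa [← e]⟩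
      obtain ⟨a⟩ := ‹Nonempty A₀›
      rw [e] at hVout
      have h3 := congrFun (congrFun hVout a) a
      have h4 : Matrix.trace ((Fintype.card A₀ : ℂ)⁻¹ • trInp X) = (m : ℂ) := by
        simpa [trOut, idFst, Matrix.trace] using h3
      rw [h4, Complex.ofReal_re]
    have := hr.2 key
    exact_mod_cast Int.ceil_le_ceil this
end
end

section
/- Non-signalling bipartite superchannels preserve non-signalling channels (Choi/link-product form): let A₀, Ā₀, Ā₁, A₁, B₀, B̄₀, B̄₁, B₁ be finite nonempty types and let J^Θ, indexed by A₀ × Ā₀ × Ā₁ × A₁ × B₀ × B̄₀ × B̄₁ × B₁, satisfy: (i) J^Θ is positive semidefinite; (ii) Tr_{Ā₀ A₁ B̄₀ B₁} J^Θ = I_{A₀ Ā₁ B₀ B̄₁}; (iii) Tr_{Ā₀ A₁} J^Θ = π_{A₀} ⊗ Tr_{A₀ Ā₀ A₁} J^Θ; (iv) Tr_{A₁} J^Θ = π_{Ā₁} ⊗ Tr_{Ā₁ A₁} J^Θ; (v) Tr_{B̄₀ B₁} J^Θ = π_{B₀} ⊗ Tr_{B₀ B̄₀ B₁} J^Θ;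 (vi) Tr_{B₁} J^Θ = π_{B̄₁} ⊗ Tr_{B̄₁ B₁} J^Θ. Let J^N, indexed by Ā₀ × Ā₁ × B̄₀ × B̄₁, be the Choi matrix of a bipartite channel satisfying the non-signalling conditions. Define the link product J^out, indexed by A₀ × A₁ × B₀ × B₁, by J^out(x, x') = ∑_{ȳ, ȳ'} J^Θ(ι(x, ȳ), ι(x', ȳ')) · J^N(ȳ', ȳ), where ȳ, ȳ' range over Ā₀ × Ā₁ × B̄₀ × B̄₁ and ι interleaves the indices into the order A₀, Ā₀, Ā₁, A₁, B₀, B̄₀, B̄₁, B₁. Then J^out is positive semidefinite, Tr_{A₁B₁} J^out = I_{A₀B₀}, and J^out satisfies the non-signalling conditions: Tr_{A₁} J^out = π_{A₀} ⊗ Tr_{A₀A₁} J^out and Tr_{B₁} J^out = π_{B₀} ⊗ Tr_{B₀B₁} J^out. -/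
open Matrix
open scoped ComplexOrder

noncomputable section

section Superchannel

variable {A0 Ab0 Ab1 A1 B0 Bb0 Bb1 B1 : Type*}
  [Fintype A0] [Fintype Ab0] [Fintype Ab1] [Fintype A1]
  [Fintype B0] [Fintype Bb0] [Fintype Bb1] [Fintype B1]
  [DecidableEq A0] [DecidableEq Ab0] [DecidableEq Ab1] [DecidableEq A1]
  [DecidableEq B0] [DecidableEq Bb0] [DecidableEq Bb1] [DecidableEq B1]

/-- `Tr_{Ā₀ A₁ B̄₀ B₁} J^Θ`, indexed by `A₀ × Ā₁ × B₀ × B̄₁`. -/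
def scTP (J : Matrix (A0 × Ab0 × Ab1 × A1 × B0 × Bb0 × Bb1 × B1)
      (A0 × Ab0 × Ab1 × A1 × B0 × Bb0 × Bb1 × B1) ℂ) :
    Matrix (A0 × Ab1 × B0 × Bb1) (A0 × Ab1 × B0 × Bb1) ℂ :=
  fun x y => ∑ ab0 : Ab0, ∑ a1 : A1, ∑ bb0 : Bb0, ∑ b1 : B1,
    J (x.1, ab0, x.2.1, a1, x.2.2.1, bb0, x.2.2.2, b1)
      (y.1, ab0, y.2.1, a1, y.2.2.1, bb0, y.2.2.2, b1)

/-- `Tr_{Ā₀ A₁} J^Θ`, indexed by `A₀ × Ā₁ × B₀ × B̄₀ × B̄₁ × B₁`. -/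
def scTrAb0A1 (J : Matrix (A0 × Ab0 × Ab1 × A1 × B0 × Bb0 × Bb1 × B1)
      (A0 × Ab0 × Ab1 × A1 × B0 × Bb0 × Bb1 × B1) ℂ) :
    Matrix (A0 × Ab1 × B0 × Bb0 × Bb1 × B1) (A0 × Ab1 × B0 × Bb0 × Bb1 × B1) ℂ :=
  fun x y => ∑ ab0 : Ab0, ∑ a1 : A1,
    J (x.1, ab0, x.2.1, a1, x.2.2) (y.1, ab0, y.2.1, a1, y.2.2)

/-- `Tr_{A₀ Ā₀ A₁} J^Θ`, indexed by `Ā₁ × B₀ × B̄₀ × B̄₁ × B₁`. -/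
def scTrA0Ab0A1 (J : Matrix (A0 × Ab0 × Ab1 × A1 × B0 × Bb0 × Bb1 × B1)
      (A0 × Ab0 × Ab1 × A1 × B0 × Bb0 × Bb1 × B1) ℂ) :
    Matrix (Ab1 × B0 × Bb0 × Bb1 × B1) (Ab1 × B0 × Bb0 × Bb1 × B1) ℂ :=
  fun x y => ∑ a0 : A0, ∑ ab0 : Ab0, ∑ a1 : A1,
    J (a0, ab0, x.1, a1, x.2) (a0, ab0, y.1, a1, y.2)

/-- `Tr_{A₁} J^Θ`, indexed by `A₀ × Ā₀ × Ā₁ × B₀ × B̄₀ × B̄₁ × B₁`. -/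
def scTrA1 (J : Matrix (A0 × Ab0 × Ab1 × A1 × B0 × Bb0 × Bb1 × B1)
      (A0 × Ab0 × Ab1 × A1 × B0 × Bb0 × Bb1 × B1) ℂ) :
    Matrix (A0 × Ab0 × Ab1 × B0 × Bb0 × Bb1 × B1)
      (A0 × Ab0 × Ab1 × B0 × Bb0 × Bb1 × B1) ℂ :=
  fun x y => ∑ a1 : A1,
    J (x.1, x.2.1, x.2.2.1, a1, x.2.2.2) (y.1, y.2.1, y.2.2.1, a1, y.2.2.2)

/-- `Tr_{Ā₁ A₁} J^Θ`, indexed by `A₀ × Ā₀ × B₀ × B̄₀ × B̄₁ × B₁`. -/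
def scTrAb1A1 (J : Matrix (A0 × Ab0 × Ab1 × A1 × B0 × Bb0 × Bb1 × B1)
      (A0 × Ab0 × Ab1 × A1 × B0 × Bb0 × Bb1 × B1) ℂ) :
    Matrix (A0 × Ab0 × B0 × Bb0 × Bb1 × B1) (A0 × Ab0 × B0 × Bb0 × Bb1 × B1) ℂ :=
  fun x y => ∑ ab1 : Ab1, ∑ a1 : A1,
    J (x.1, x.2.1, ab1, a1, x.2.2) (y.1, y.2.1, ab1, a1, y.2.2)

/-- `π_{Ā₁} ⊗ Y` with `π_{Ā₁}` inserted in the third slot of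
`A₀ × Ā₀ × Ā₁ × B₀ × B̄₀ × B̄₁ × B₁`. -/
def piAb1 (Y : Matrix (A0 × Ab0 × B0 × Bb0 × Bb1 × B1) (A0 × Ab0 × B0 × Bb0 × Bb1 × B1) ℂ) :
    Matrix (A0 × Ab0 × Ab1 × B0 × Bb0 × Bb1 × B1)
      (A0 × Ab0 × Ab1 × B0 × Bb0 × Bb1 × B1) ℂ :=
  fun x y => ((Fintype.card Ab1 : ℂ))⁻¹ * (if x.2.2.1 = y.2.2.1 then 1 else 0) *
    Y (x.1, x.2.1, x.2.2.2) (y.1, y.2.1, y.2.2.2)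

/-- `Tr_{B̄₀ B₁} J^Θ`, indexed by `A₀ × Ā₀ × Ā₁ × A₁ × B₀ × B̄₁`. -/
def scTrBb0B1 (J : Matrix (A0 × Ab0 × Ab1 × A1 × B0 × Bb0 × Bb1 × B1)
      (A0 × Ab0 × Ab1 × A1 × B0 × Bb0 × Bb1 × B1) ℂ) :
    Matrix (A0 × Ab0 × Ab1 × A1 × B0 × Bb1) (A0 × Ab0 × Ab1 × A1 × B0 × Bb1) ℂ :=
  fun x y => ∑ bb0 : Bb0, ∑ b1 : B1,
    J (x.1, x.2.1, x.2.2.1, x.2.2.2.1, x.2.2.2.2.1, bb0, x.2.2.2.2.2, b1)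
      (y.1, y.2.1, y.2.2.1, y.2.2.2.1, y.2.2.2.2.1, bb0, y.2.2.2.2.2, b1)

/-- `Tr_{B₀ B̄₀ B₁} J^Θ`, indexed by `A₀ × Ā₀ × Ā₁ × A₁ × B̄₁`. -/
def scTrB0Bb0B1 (J : Matrix (A0 × Ab0 × Ab1 × A1 × B0 × Bb0 × Bb1 × B1)
      (A0 × Ab0 × Ab1 × A1 × B0 × Bb0 × Bb1 × B1) ℂ) :
    Matrix (A0 × Ab0 × Ab1 × A1 × Bb1) (A0 × Ab0 × Ab1 × A1 × Bb1) ℂ :=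
  fun x y => ∑ b0 : B0, ∑ bb0 : Bb0, ∑ b1 : B1,
    J (x.1, x.2.1, x.2.2.1, x.2.2.2.1, b0, bb0, x.2.2.2.2, b1)
      (y.1, y.2.1, y.2.2.1, y.2.2.2.1, b0, bb0, y.2.2.2.2, b1)

/-- `π_{B₀} ⊗ Y` with `π_{B₀}` inserted in the fifth slot of
`A₀ × Ā₀ × Ā₁ × A₁ × B₀ × B̄₁`. -/
def piB0sc (Y : Matrix (A0 × Ab0 × Ab1 × A1 × Bb1) (A0 × Ab0 × Ab1 × A1 × Bb1) ℂ) :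
    Matrix (A0 × Ab0 × Ab1 × A1 × B0 × Bb1) (A0 × Ab0 × Ab1 × A1 × B0 × Bb1) ℂ :=
  fun x y => ((Fintype.card B0 : ℂ))⁻¹ * (if x.2.2.2.2.1 = y.2.2.2.2.1 then 1 else 0) *
    Y (x.1, x.2.1, x.2.2.1, x.2.2.2.1, x.2.2.2.2.2) (y.1, y.2.1, y.2.2.1, y.2.2.2.1, y.2.2.2.2.2)

/-- `Tr_{B₁} J^Θ`, indexed by `A₀ × Ā₀ × Ā₁ × A₁ × B₀ × B̄₀ × B̄₁`. -/
def scTrB1 (J : Matrix (A0 × Ab0 × Ab1 × A1 × B0 × Bb0 × Bb1 × B1)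
      (A0 × Ab0 × Ab1 × A1 × B0 × Bb0 × Bb1 × B1) ℂ) :
    Matrix (A0 × Ab0 × Ab1 × A1 × B0 × Bb0 × Bb1)
      (A0 × Ab0 × Ab1 × A1 × B0 × Bb0 × Bb1) ℂ :=
  fun x y => ∑ b1 : B1,
    J (x.1, x.2.1, x.2.2.1, x.2.2.2.1, x.2.2.2.2.1, x.2.2.2.2.2.1, x.2.2.2.2.2.2, b1)
      (y.1, y.2.1, y.2.2.1, y.2.2.2.1, y.2.2.2.2.1, y.2.2.2.2.2.1, y.2.2.2.2.2.2, b1)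

/-- `Tr_{B̄₁ B₁} J^Θ`, indexed by `A₀ × Ā₀ × Ā₁ × A₁ × B₀ × B̄₀`. -/
def scTrBb1B1 (J : Matrix (A0 × Ab0 × Ab1 × A1 × B0 × Bb0 × Bb1 × B1)
      (A0 × Ab0 × Ab1 × A1 × B0 × Bb0 × Bb1 × B1) ℂ) :
    Matrix (A0 × Ab0 × Ab1 × A1 × B0 × Bb0) (A0 × Ab0 × Ab1 × A1 × B0 × Bb0) ℂ :=
  fun x y => ∑ bb1 : Bb1, ∑ b1 : B1,
    J (x.1, x.2.1, x.2.2.1, x.2.2.2.1, x.2.2.2.2.1, x.2.2.2.2.2, bb1, b1)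
      (y.1, y.2.1, y.2.2.1, y.2.2.2.1, y.2.2.2.2.1, y.2.2.2.2.2, bb1, b1)

/-- `π_{B̄₁} ⊗ Y` with `π_{B̄₁}` inserted in the seventh slot of
`A₀ × Ā₀ × Ā₁ × A₁ × B₀ × B̄₀ × B̄₁`. -/
def piBb1sc (Y : Matrix (A0 × Ab0 × Ab1 × A1 × B0 × Bb0) (A0 × Ab0 × Ab1 × A1 × B0 × Bb0) ℂ) :
    Matrix (A0 × Ab0 × Ab1 × A1 × B0 × Bb0 × Bb1)
      (A0 × Ab0 × Ab1 × A1 × B0 × Bb0 × Bb1) ℂ :=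
  fun x y => ((Fintype.card Bb1 : ℂ))⁻¹ * (if x.2.2.2.2.2.2 = y.2.2.2.2.2.2 then 1 else 0) *
    Y (x.1, x.2.1, x.2.2.1, x.2.2.2.1, x.2.2.2.2.1, x.2.2.2.2.2.1)
      (y.1, y.2.1, y.2.2.1, y.2.2.2.1, y.2.2.2.2.1, y.2.2.2.2.2.1)

/-- The link product `J^out(x, x') = ∑_{ȳ, ȳ'} J^Θ(ι(x,ȳ), ι(x',ȳ')) · J^N(ȳ', ȳ)`,
the Choi matrix of the channel obtained by applying the superchannel with Choi matrix
`J^Θ` to the channel with Choi matrix `J^N`. -/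
def linkOut (JΘ : Matrix (A0 × Ab0 × Ab1 × A1 × B0 × Bb0 × Bb1 × B1)
      (A0 × Ab0 × Ab1 × A1 × B0 × Bb0 × Bb1 × B1) ℂ)
    (JN : Matrix (Ab0 × Ab1 × Bb0 × Bb1) (Ab0 × Ab1 × Bb0 × Bb1) ℂ) :
    Matrix (A0 × A1 × B0 × B1) (A0 × A1 × B0 × B1) ℂ :=
  fun x y => ∑ z : Ab0 × Ab1 × Bb0 × Bb1, ∑ w : Ab0 × Ab1 × Bb0 × Bb1,
    JΘ (x.1, z.1, z.2.1, x.2.1, x.2.2.1, z.2.2.1, z.2.2.2, x.2.2.2)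
       (y.1, w.1, w.2.1, y.2.1, y.2.2.1, w.2.2.1, w.2.2.2, y.2.2.2) * JN w z

end Superchannel

theorem comm2_aux {P Q X : Type*} [Fintype P] [Fintype Q] [Fintype X] (f : P → Q → X → ℂ) :
    ∑ p, ∑ q, ∑ x, f p q x = ∑ x, ∑ p, ∑ q, f p q x := by
  rw [Finset.sum_comm (s := (Finset.univ : Finset X))]
  exact Finset.sum_congr rfl fun p _ => Finset.sum_comm

theorem comm3_aux {P Q R X : Type*} [Fintype P] [Fintype Q] [Fintype R] [Fintype X]
    (f : P → Q → R → X → ℂ) :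
    ∑ p, ∑ q, ∑ r, ∑ x, f p q r x = ∑ x, ∑ p, ∑ q, ∑ r, f p q r x := by
  rw [Finset.sum_comm (s := (Finset.univ : Finset X))]
  exact Finset.sum_congr rfl fun p _ => comm2_aux _

theorem gram_exists_aux {n : Type*} [Fintype n] {J : Matrix n n ℂ}
    (h : J.PosSemidef) : ∃ Q : Matrix n n ℂ, J = Qᴴ * Q := by
  classical
  open scoped MatrixOrder in
  exact CStarAlgebra.nonneg_iff_eq_star_mul_self.mp h.nonneg

theorem gram_aux {Z K L : Type*} [Fintype Z] [Fintype K] [Fintype L]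
    (f g : Z → L → ℂ) (u v : Z → K → ℂ) :
    ∑ z, ∑ w, (∑ l, f z l * g w l) * (∑ k, u w k * v z k) =
      ∑ kl : K × L, (∑ z, f z kl.2 * v z kl.1) * ∑ w, g w kl.2 * u w kl.1 := by
  simp only [Finset.sum_mul_sum]
  have : ∑ x : Z × Z × L × K, (f x.1 x.2.2.1 * g x.2.1 x.2.2.1) * (u x.2.1 x.2.2.2 * v x.1 x.2.2.2)
      = ∑ y : (K × L) × Z × Z, (f y.2.1 y.1.2 * v y.2.1 y.1.1) * (g y.2.2 y.1.2 * u y.2.2 y.1.1) := by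
    refine Fintype.sum_equiv ⟨fun x => ((x.2.2.2, x.2.2.1), x.1, x.2.1),
      fun y => (y.2.1, y.2.2, y.1.2, y.1.1), fun _ => rfl, fun _ => rfl⟩ _ _ fun x => ?_
    simp only [Equiv.coe_fn_mk]
    ring
  simpa only [Fintype.sum_prod_type] using this

theorem reorder_A_aux {R P Q S T : Type*} [Fintype R] [Fintype P] [Fintype Q] [Fintype S]
    [Fintype T] (f : R → P → Q → S → T → P → Q → S → T → ℂ) :
    ∑ r, ∑ p, ∑ q, ∑ s, ∑ t, ∑ p', ∑ q', ∑ s', ∑ t', f r p q s t p' q' s' t' =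
    ∑ s, ∑ t, ∑ s', ∑ t', ∑ r, ∑ p, ∑ q, ∑ p', ∑ q', f r p q s t p' q' s' t' := by
  have : ∑ x : R × P × Q × S × T × P × Q × S × T,
      f x.1 x.2.1 x.2.2.1 x.2.2.2.1 x.2.2.2.2.1 x.2.2.2.2.2.1 x.2.2.2.2.2.2.1
        x.2.2.2.2.2.2.2.1 x.2.2.2.2.2.2.2.2 =
      ∑ y : S × T × S × T × R × P × Q × P × Q,
        f y.2.2.2.2.1 y.2.2.2.2.2.1 y.2.2.2.2.2.2.1 y.1 y.2.1 y.2.2.2.2.2.2.2.1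
          y.2.2.2.2.2.2.2.2 y.2.2.1 y.2.2.2.1 :=
    Fintype.sum_equiv ⟨fun ⟨r, p, q, s, t, p', q', s', t'⟩ => ⟨s, t, s', t', r, p, q, p', q'⟩,
      fun ⟨s, t, s', t', r, p, q, p', q'⟩ => ⟨r, p, q, s, t, p', q', s', t'⟩,
      fun _ => rfl, fun _ => rfl⟩ _ _ fun x => rfl
  simpa only [Fintype.sum_prod_type] using this

theorem reorder_B_aux {R P Q S T : Type*} [Fintype R] [Fintype P] [Fintype Q] [Fintype S]
    [Fintype T] (f : R → P → Q → S → T → P → Q → S → T → ℂ) :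
    ∑ r, ∑ p, ∑ q, ∑ s, ∑ t, ∑ p', ∑ q', ∑ s', ∑ t', f r p q s t p' q' s' t' =
    ∑ p, ∑ q, ∑ p', ∑ q', ∑ r, ∑ s, ∑ t, ∑ s', ∑ t', f r p q s t p' q' s' t' := by
  have : ∑ x : R × P × Q × S × T × P × Q × S × T,
      f x.1 x.2.1 x.2.2.1 x.2.2.2.1 x.2.2.2.2.1 x.2.2.2.2.2.1 x.2.2.2.2.2.2.1
        x.2.2.2.2.2.2.2.1 x.2.2.2.2.2.2.2.2 =
      ∑ y : P × Q × P × Q × R × S × T × S × T,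
        f y.2.2.2.2.1 y.1 y.2.1 y.2.2.2.2.2.1 y.2.2.2.2.2.2.1 y.2.2.1 y.2.2.2.1
          y.2.2.2.2.2.2.2.1 y.2.2.2.2.2.2.2.2 :=
    Fintype.sum_equiv ⟨fun ⟨r, p, q, s, t, p', q', s', t'⟩ => ⟨p, q, p', q', r, s, t, s', t'⟩,
      fun ⟨p, q, p', q', r, s, t, s', t'⟩ => ⟨r, p, q, s, t, p', q', s', t'⟩,
      fun _ => rfl, fun _ => rfl⟩ _ _ fun x => rfl
  simpa only [Fintype.sum_prod_type] using this

theorem one_side_aux {A0 Ab0 Ab1 A1 : Type*}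
    [Fintype A0] [Fintype Ab0] [Fintype Ab1] [Fintype A1]
    [DecidableEq A0] [DecidableEq Ab0] [DecidableEq Ab1]
    (F : A0 → Ab0 → Ab1 → A1 → A0 → Ab0 → Ab1 → A1 → ℂ)
    (N : Ab0 → Ab1 → Ab0 → Ab1 → ℂ)
    (h4 : ∀ a p q a' p' q', ∑ r, F a p q r a' p' q' r =
      (Fintype.card Ab1 : ℂ)⁻¹ * (if q = q' then 1 else 0) * ∑ q, ∑ r, F a p q r a' p' q r)
    (h3 : ∀ a q a' q', ∑ p, ∑ r, F a p q r a' p q' r =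
      (Fintype.card A0 : ℂ)⁻¹ * (if a = a' then 1 else 0) *
        ∑ a, ∑ p, ∑ r, F a p q r a p q' r)
    (hN : ∀ p p', ∑ q, N p q p' q =
      (Fintype.card Ab0 : ℂ)⁻¹ * (if p = p' then 1 else 0) * ∑ p, ∑ q, N p q p q)
    (a a' : A0) :
    ∑ r, ∑ p, ∑ q, ∑ p', ∑ q', F a p q r a' p' q' r * N p' q' p q =
      (Fintype.card A0 : ℂ)⁻¹ * (if a = a' then 1 else 0) *
      ((Fintype.card Ab0 : ℂ)⁻¹ * (Fintype.card Ab1 : ℂ)⁻¹ *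
        ((∑ a, ∑ p, ∑ q, ∑ r, F a p q r a p q r) * ∑ p, ∑ q, N p q p q)) := by
  set n := ∑ p, ∑ q, N p q p q with hn
  have e1 : ∑ r, ∑ p, ∑ q, ∑ p', ∑ q', F a p q r a' p' q' r * N p' q' p q =
      ∑ p, ∑ q, ∑ p', ∑ q', (∑ r, F a p q r a' p' q' r) * N p' q' p q := by
    simp only [Finset.sum_mul]
    rw [Finset.sum_comm]; refine Finset.sum_congr rfl fun p _ => ?_
    rw [Finset.sum_comm]; refine Finset.sum_congr rfl fun q _ => ?_
    rw [Finset.sum_comm]; refine Finset.sum_congr rfl fun p' _ => ?_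
    rw [Finset.sum_comm]
  rw [e1]
  have e2 : ∀ p, ∑ q, ∑ p', ∑ q', (∑ r, F a p q r a' p' q' r) * N p' q' p q =
      (Fintype.card Ab0 : ℂ)⁻¹ * (Fintype.card Ab1 : ℂ)⁻¹ *
        ((∑ q, ∑ r, F a p q r a' p q r) * n) := by
    intro p
    have : ∀ q p', ∑ q', (∑ r, F a p q r a' p' q' r) * N p' q' p q =
        (Fintype.card Ab1 : ℂ)⁻¹ * (∑ q, ∑ r, F a p q r a' p' q r) * N p' q p q := by
      intro q p'
      rw [Finset.sum_eq_single q]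
      · rw [h4]; simp
      · intro q' _ hq
        rw [h4, if_neg (Ne.symm hq)]; simp
      · simp
    simp only [this]
    rw [Finset.sum_comm]
    simp only [← Finset.mul_sum, hN]
    rw [Finset.sum_eq_single p]
    · simp; ring
    · intro p' _ hp
      rw [if_neg hp]; simp
    · simp
  simp only [e2]
  rw [← Finset.mul_sum, ← Finset.sum_mul]
  have e3 : ∑ p, ∑ q, ∑ r, F a p q r a' p q r =
      (Fintype.card A0 : ℂ)⁻¹ * (if a = a' then 1 else 0) *
        ∑ a, ∑ p, ∑ q, ∑ r, F a p q r a p q r := by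
    rw [Finset.sum_comm]
    rw [Finset.sum_congr rfl fun q _ => h3 a q a' q]
    rw [← Finset.mul_sum]
    congr 1
    rw [Finset.sum_comm]
    refine Finset.sum_congr rfl fun a _ => ?_
    rw [Finset.sum_comm]
  rw [e3]; ring

section LinkAux

variable {A0 Ab0 Ab1 A1 B0 Bb0 Bb1 B1 : Type*}
  [Fintype A0] [Fintype Ab0] [Fintype Ab1] [Fintype A1]
  [Fintype B0] [Fintype Bb0] [Fintype Bb1] [Fintype B1]

theorem linkOut_psd_aux
    [DecidableEq A0] [DecidableEq Ab0] [DecidableEq Ab1] [DecidableEq A1]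
    [DecidableEq B0] [DecidableEq Bb0] [DecidableEq Bb1] [DecidableEq B1]
    (JΘ : Matrix (A0 × Ab0 × Ab1 × A1 × B0 × Bb0 × Bb1 × B1)
      (A0 × Ab0 × Ab1 × A1 × B0 × Bb0 × Bb1 × B1) ℂ)
    (JN : Matrix (Ab0 × Ab1 × Bb0 × Bb1) (Ab0 × Ab1 × Bb0 × Bb1) ℂ)
    (h : JΘ.PosSemidef) (hN : JN.PosSemidef) : (linkOut JΘ JN).PosSemidef := by
  obtain ⟨Q, rfl⟩ := gram_exists_aux h
  obtain ⟨R, rfl⟩ := gram_exists_aux hN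
  let C : Matrix ((Ab0 × Ab1 × Bb0 × Bb1) × (A0 × Ab0 × Ab1 × A1 × B0 × Bb0 × Bb1 × B1))
      (A0 × A1 × B0 × B1) ℂ := fun kl y => ∑ w : Ab0 × Ab1 × Bb0 × Bb1,
    Q kl.2 (y.1, w.1, w.2.1, y.2.1, y.2.2.1, w.2.2.1, w.2.2.2, y.2.2.2) * star (R kl.1 w)
  have : linkOut (Qᴴ * Q) (Rᴴ * R) = Cᴴ * C := by
    ext x y
    simp only [linkOut, Matrix.mul_apply, Matrix.conjTranspose_apply]
    rw [gram_aux (fun z l => star (Q l (x.1, z.1, z.2.1, x.2.1, x.2.2.1, z.2.2.1, z.2.2.2, x.2.2.2)))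
      (fun w l => Q l (y.1, w.1, w.2.1, y.2.1, y.2.2.1, w.2.2.1, w.2.2.2, y.2.2.2))
      (fun w k => star (R k w)) (fun z k => R k z)]
    refine Finset.sum_congr rfl fun kl _ => ?_
    simp only [C, star_sum, star_mul', star_star]
  rw [this]
  exact Matrix.posSemidef_conjTranspose_mul_self C

end LinkAux

/-- Non-signalling bipartite superchannels preserve non-signalling channels
(Choi/link-product form): if `J^Θ` satisfies the Choi-matrix conditions (i)–(vi) of a
non-signalling bipartite superchannel and `J^N` is the Choi matrix of a non-signalling
bipartite channel, then the link product `J^out` is the Choi matrix of a non-signalling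
bipartite channel. -/
theorem ns_superchannel_preserves_ns
    {A0 Ab0 Ab1 A1 B0 Bb0 Bb1 B1 : Type*}
    [Fintype A0] [Fintype Ab0] [Fintype Ab1] [Fintype A1]
    [Fintype B0] [Fintype Bb0] [Fintype Bb1] [Fintype B1]
    [DecidableEq A0] [DecidableEq Ab0] [DecidableEq Ab1] [DecidableEq A1]
    [DecidableEq B0] [DecidableEq Bb0] [DecidableEq Bb1] [DecidableEq B1]
    [Nonempty A0] [Nonempty Ab0] [Nonempty Ab1] [Nonempty A1]
    [Nonempty B0] [Nonempty Bb0] [Nonempty Bb1] [Nonempty B1]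
    (JΘ : Matrix (A0 × Ab0 × Ab1 × A1 × B0 × Bb0 × Bb1 × B1)
      (A0 × Ab0 × Ab1 × A1 × B0 × Bb0 × Bb1 × B1) ℂ)
    (JN : Matrix (Ab0 × Ab1 × Bb0 × Bb1) (Ab0 × Ab1 × Bb0 × Bb1) ℂ)
    (hΘ₁ : JΘ.PosSemidef)
    (hΘ₂ : scTP JΘ = 1)
    (hΘ₃ : scTrAb0A1 JΘ = piFst (scTrA0Ab0A1 JΘ))
    (hΘ₄ : scTrA1 JΘ = piAb1 (scTrAb1A1 JΘ))
    (hΘ₅ : scTrBb0B1 JΘ = piB0sc (scTrB0Bb0B1 JΘ))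
    (hΘ₆ : scTrB1 JΘ = piBb1sc (scTrBb1B1 JΘ))
    (hN₁ : JN.PosSemidef) (hN₂ : trA1B1 JN = 1) (hN₃ : NS JN) :
    (linkOut JΘ JN).PosSemidef ∧ trA1B1 (linkOut JΘ JN) = 1 ∧ NS (linkOut JΘ JN) := by
  obtain ⟨hNA, hNB⟩ := hN₃
  have hA1 : ∀ a b0 b1 a' b0' b1', ∑ r, linkOut JΘ JN (a, r, b0, b1) (a', r, b0', b1') =
    (Fintype.card A0 : ℂ)⁻¹ * (if a = a' then 1 else 0) *
      ((Fintype.card Ab0 : ℂ)⁻¹ * (Fintype.card Ab1 : ℂ)⁻¹ *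
       ∑ s, ∑ t, ∑ s', ∑ t',
        ((∑ a, ∑ p, ∑ q, ∑ r, JΘ (a, p, q, r, b0, s, t, b1) (a, p, q, r, b0', s', t', b1')) *
          ∑ p, ∑ q, JN (p, q, s', t') (p, q, s, t))) := by
    intro a b0 b1 a' b0' b1'
    simp only [linkOut, Fintype.sum_prod_type]
    rw [reorder_A_aux]
    simp only [Finset.mul_sum (Finset.univ : Finset Bb0), Finset.mul_sum (Finset.univ : Finset Bb1)]
    refine Finset.sum_congr rfl fun s _ => Finset.sum_congr rfl fun t _ =>
      Finset.sum_congr rfl fun s' _ => Finset.sum_congr rfl fun t' _ => ?_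
    refine one_side_aux
      (fun a p q r a' p' q' r' => JΘ (a, p, q, r, b0, s, t, b1) (a', p', q', r', b0', s', t', b1'))
      (fun p q p' q' => JN (p, q, s', t') (p', q', s, t)) ?_ ?_ ?_ a a'
    · intro a p q a' p' q'
      exact congrFun (congrFun hΘ₄ (a, p, q, b0, s, t, b1)) (a', p', q', b0', s', t', b1')
    · intro a q a' q'
      exact congrFun (congrFun hΘ₃ (a, q, b0, s, t, b1)) (a', q', b0', s', t', b1')
    · intro p p'
      exact congrFun (congrFun hNA (p, s', t')) (p', s, t)
  have hB1 : ∀ b a0 a1 b' a0' a1', ∑ r, linkOut JΘ JN (a0, a1, b, r) (a0', a1', b', r) =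
    (Fintype.card B0 : ℂ)⁻¹ * (if b = b' then 1 else 0) *
      ((Fintype.card Bb0 : ℂ)⁻¹ * (Fintype.card Bb1 : ℂ)⁻¹ *
       ∑ s, ∑ t, ∑ s', ∑ t',
        ((∑ b, ∑ p, ∑ q, ∑ r, JΘ (a0, s, t, a1, b, p, q, r) (a0', s', t', a1', b, p, q, r)) *
          ∑ p, ∑ q, JN (s', t', p, q) (s, t, p, q))) := by
    intro b a0 a1 b' a0' a1'
    simp only [linkOut, Fintype.sum_prod_type]
    rw [reorder_B_aux]
    simp only [Finset.mul_sum (Finset.univ : Finset Ab0), Finset.mul_sum (Finset.univ : Finset Ab1)]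
    refine Finset.sum_congr rfl fun s _ => Finset.sum_congr rfl fun t _ =>
      Finset.sum_congr rfl fun s' _ => Finset.sum_congr rfl fun t' _ => ?_
    refine one_side_aux
      (fun b p q r b' p' q' r' => JΘ (a0, s, t, a1, b, p, q, r) (a0', s', t', a1', b', p', q', r'))
      (fun p q p' q' => JN (s', t', p, q) (s, t, p', q')) ?_ ?_ ?_ b b'
    · intro b p q b' p' q'
      exact congrFun (congrFun hΘ₆ (a0, s, t, a1, b, p, q)) (a0', s', t', a1', b', p', q')
    · intro b q b' q'
      exact congrFun (congrFun hΘ₅ (a0, s, t, a1, b, q)) (a0', s', t', a1', b', q')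
    · intro p p'
      exact congrFun (congrFun hNB (s', t', p)) (s, t, p')
  have cA : (Fintype.card A0 : ℂ) ≠ 0 := by simp
  have cB : (Fintype.card B0 : ℂ) ≠ 0 := by simp
  refine ⟨linkOut_psd_aux JΘ JN hΘ₁ hN₁, ?_, ?_, ?_⟩
  · ext ⟨a, b⟩ ⟨a', b'⟩
    simp only [trA1B1]
    rw [Finset.sum_comm]
    simp only [hA1]
    have key := one_side_aux
      (fun b s t u b' s' t' u' => ∑ x : A0 × Ab0 × Ab1 × A1,
        JΘ (x.1, x.2.1, x.2.2.1, x.2.2.2, b, s, t, u)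
          (x.1, x.2.1, x.2.2.1, x.2.2.2, b', s', t', u'))
      (fun s t s' t' => ∑ x : Ab0 × Ab1, JN (x.1, x.2, s, t) (x.1, x.2, s', t'))
      (by
        intro b p q b' p' q'
        rw [Finset.sum_comm, comm2_aux, Finset.mul_sum]
        refine Finset.sum_congr rfl fun x _ => ?_
        exact congrFun (congrFun hΘ₆ (x.1, x.2.1, x.2.2.1, x.2.2.2, b, p, q))
          (x.1, x.2.1, x.2.2.1, x.2.2.2, b', p', q'))
      (by
        intro b q b' q'
        rw [comm2_aux, comm3_aux, Finset.mul_sum]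
        refine Finset.sum_congr rfl fun x _ => ?_
        exact congrFun (congrFun hΘ₅ (x.1, x.2.1, x.2.2.1, x.2.2.2, b, q))
          (x.1, x.2.1, x.2.2.1, x.2.2.2, b', q'))
      (by
        intro p p'
        rw [Finset.sum_comm, comm2_aux, Finset.mul_sum]
        refine Finset.sum_congr rfl fun x _ => ?_
        exact congrFun (congrFun hNB (x.1, x.2, p)) (x.1, x.2, p'))
      b b'
    simp only [Fintype.sum_prod_type] at key
    rw [← Finset.mul_sum, ← Finset.mul_sum, key]
    have tN : ∑ p : Bb0, ∑ q : Bb1, ∑ x : Ab0, ∑ y : Ab1, JN (x, y, p, q) (x, y, p, q) =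
        Fintype.card Ab0 * Fintype.card Bb0 := by
      have h : ∀ (x : Ab0) (p : Bb0), ∑ y : Ab1, ∑ q : Bb1, JN (x, y, p, q) (x, y, p, q) = 1 := by
        intro x p
        have := congrFun (congrFun hN₂ (x, p)) (x, p)
        rwa [Matrix.one_apply_eq] at this
      have h2 : ∑ z : Bb0 × Bb1 × Ab0 × Ab1, JN (z.2.2.1, z.2.2.2, z.1, z.2.1)
          (z.2.2.1, z.2.2.2, z.1, z.2.1) = ∑ z : Ab0 × Bb0 × Ab1 × Bb1,
          JN (z.1, z.2.2.1, z.2.1, z.2.2.2) (z.1, z.2.2.1, z.2.1, z.2.2.2) :=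
        Fintype.sum_equiv ⟨fun z => (z.2.2.1, z.1, z.2.2.2, z.2.1),
          fun z => (z.2.1, z.2.2.2, z.1, z.2.2.1), fun _ => rfl, fun _ => rfl⟩ _ _ fun _ => rfl
      simp only [Fintype.sum_prod_type] at h2
      rw [h2]
      simp [h]
    have tΘ : ∑ b : B0, ∑ p : Bb0, ∑ q : Bb1, ∑ r : B1, ∑ x : A0, ∑ y : Ab0, ∑ z : Ab1, ∑ w : A1,
        JΘ (x, y, z, w, b, p, q, r) (x, y, z, w, b, p, q, r) =
        Fintype.card A0 * (Fintype.card Ab1 * (Fintype.card B0 * Fintype.card Bb1)) := by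
      have h : ∀ (x : A0) (z : Ab1) (b : B0) (q : Bb1), ∑ y : Ab0, ∑ w : A1, ∑ p : Bb0, ∑ r : B1,
          JΘ (x, y, z, w, b, p, q, r) (x, y, z, w, b, p, q, r) = 1 := by
        intro x z b q
        have := congrFun (congrFun hΘ₂ (x, z, b, q)) (x, z, b, q)
        rwa [Matrix.one_apply_eq] at this
      have h2 : ∑ v : B0 × Bb0 × Bb1 × B1 × A0 × Ab0 × Ab1 × A1,
          JΘ (v.2.2.2.2.1, v.2.2.2.2.2.1, v.2.2.2.2.2.2.1, v.2.2.2.2.2.2.2,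
            v.1, v.2.1, v.2.2.1, v.2.2.2.1)
            (v.2.2.2.2.1, v.2.2.2.2.2.1, v.2.2.2.2.2.2.1, v.2.2.2.2.2.2.2,
            v.1, v.2.1, v.2.2.1, v.2.2.2.1) =
          ∑ v : A0 × Ab1 × B0 × Bb1 × Ab0 × A1 × Bb0 × B1,
          JΘ (v.1, v.2.2.2.2.1, v.2.1, v.2.2.2.2.2.1, v.2.2.1, v.2.2.2.2.2.2.1, v.2.2.2.1,
            v.2.2.2.2.2.2.2)
            (v.1, v.2.2.2.2.1, v.2.1, v.2.2.2.2.2.1, v.2.2.1, v.2.2.2.2.2.2.1, v.2.2.2.1,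
            v.2.2.2.2.2.2.2) :=
        Fintype.sum_equiv ⟨fun ⟨b, p, q, r, x, y, z, w⟩ => ⟨x, z, b, q, y, w, p, r⟩,
          fun ⟨x, z, b, q, y, w, p, r⟩ => ⟨b, p, q, r, x, y, z, w⟩,
          fun _ => rfl, fun _ => rfl⟩ _ _ fun _ => rfl
      simp only [Fintype.sum_prod_type] at h2
      rw [h2]
      simp [h]
    rw [tN, tΘ]
    have c1 : (Fintype.card Ab0 : ℂ) ≠ 0 := by simp
    have c2 : (Fintype.card Ab1 : ℂ) ≠ 0 := by simp
    have c3 : (Fintype.card Bb0 : ℂ) ≠ 0 := by simp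
    have c4 : (Fintype.card Bb1 : ℂ) ≠ 0 := by simp
    rw [Matrix.one_apply]
    by_cases ha : a = a'
    · by_cases hb : b = b'
      · simp only [ha, hb, if_true]
        field_simp
      · simp [hb]
    · simp [ha]
  · ext ⟨a, b0, b1⟩ ⟨a', b0', b1'⟩
    simp only [trA1, piFst, trA0A1, hA1, if_true]
    rw [Finset.sum_const, Finset.card_univ, nsmul_eq_mul, mul_one, mul_inv_cancel_left₀ (by assumption)]
  · ext ⟨a0, a1, b⟩ ⟨a0', a1', b'⟩
    simp only [trB1, piB0, trB0B1, hB1, if_true]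
    rw [Finset.sum_const, Finset.card_univ, nsmul_eq_mul, mul_one, mul_inv_cancel_left₀ (by assumption)]
end
end

section
/- Weak duality for the SDP of the max-relative entropy of bidirectional classical communication: let J, indexed by A₀ × A₁ × B₀ × B₁, be positive semidefinite. Suppose (λ, Y) is primal feasible: J ≤ Y, Tr_{A₁B₁} Y = λ • I_{A₀B₀}, Tr_{A₁} Y = π_{A₀} ⊗ Tr_{A₀A₁} Y, Tr_{B₁} Y = π_{B₀} ⊗ Tr_{B₀B₁} Y. Suppose (M, N, P, Q) is dual feasible: M indexed by A₀ × A₁ × B₀ × B₁ is positive semidefinite, N indexed by A₀ × B₀ is Hermitian with trace 1, P indexed by A₀ × B₀ × B₁ is Hermitian with Tr_{A₀} P = 0, Q indexed by A₀ × A₁ × B₀ is Hermitian with Tr_{B₀} Q = 0, and M ≤ N ⊗ I_{A₁B₁} + P ⊗ I_{A₁} + Q ⊗ I_{B₁} (with the natural reindexings). Then Re (Matrix.trace (M * J)) ≤ λ. -/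
open Matrix
open scoped ComplexOrder

noncomputable section

section WeakDuality

variable {A₀ A₁ B₀ B₁ : Type*} [Fintype A₀] [Fintype A₁] [Fintype B₀] [Fintype B₁]
  [DecidableEq A₀] [DecidableEq A₁] [DecidableEq B₀] [DecidableEq B₁]

/-- `N ⊗ I_{A₁B₁}` reindexed to `A₀ × A₁ × B₀ × B₁`. -/
def embedN (N : Matrix (A₀ × B₀) (A₀ × B₀) ℂ) :
    Matrix (A₀ × A₁ × B₀ × B₁) (A₀ × A₁ × B₀ × B₁) ℂ :=
  fun x y => N (x.1, x.2.2.1) (y.1, y.2.2.1) *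
    (if x.2.1 = y.2.1 ∧ x.2.2.2 = y.2.2.2 then 1 else 0)

/-- `P ⊗ I_{A₁}` reindexed to `A₀ × A₁ × B₀ × B₁`. -/
def embedP (P : Matrix (A₀ × B₀ × B₁) (A₀ × B₀ × B₁) ℂ) :
    Matrix (A₀ × A₁ × B₀ × B₁) (A₀ × A₁ × B₀ × B₁) ℂ :=
  fun x y => P (x.1, x.2.2.1, x.2.2.2) (y.1, y.2.2.1, y.2.2.2) *
    (if x.2.1 = y.2.1 then 1 else 0)

/-- `Q ⊗ I_{B₁}` reindexed to `A₀ × A₁ × B₀ × B₁`. -/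
def embedQ (Q : Matrix (A₀ × A₁ × B₀) (A₀ × A₁ × B₀) ℂ) :
    Matrix (A₀ × A₁ × B₀ × B₁) (A₀ × A₁ × B₀ × B₁) ℂ :=
  fun x y => Q (x.1, x.2.1, x.2.2.1) (y.1, y.2.1, y.2.2.1) *
    (if x.2.2.2 = y.2.2.2 then 1 else 0)

/-- `Tr_{B₀}` of a matrix on `A₀ × A₁ × B₀`. -/
def trB0Last (Q : Matrix (A₀ × A₁ × B₀) (A₀ × A₁ × B₀) ℂ) :
    Matrix (A₀ × A₁) (A₀ × A₁) ℂ :=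
  fun u v => ∑ b : B₀, Q (u.1, u.2, b) (v.1, v.2, b)

end WeakDuality

open scoped MatrixOrder Matrix.Norms.L2Operator in
theorem wd_trace_nonneg {n : Type*} [Fintype n] [DecidableEq n] {A B : Matrix n n ℂ}
    (hA : A.PosSemidef) (hB : B.PosSemidef) : 0 ≤ (Matrix.trace (A * B)).re := by
  obtain ⟨C, rfl⟩ := CStarAlgebra.nonneg_iff_eq_star_mul_self.mp hA.nonneg
  rw [Matrix.star_eq_conjTranspose]
  have h : (C * B * Cᴴ).PosSemidef := hB.mul_mul_conjTranspose_same C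
  have h2 := h.trace_nonneg
  have h3 : Matrix.trace (Cᴴ * C * B) = Matrix.trace (C * B * Cᴴ) := by
    rw [Matrix.trace_mul_comm (C * B), Matrix.mul_assoc]
  rw [h3]
  exact (Complex.le_def.mp h2).1

section WDAux

variable {A₀ A₁ B₀ B₁ : Type*} [Fintype A₀] [Fintype A₁] [Fintype B₀] [Fintype B₁]
  [DecidableEq A₀] [DecidableEq A₁] [DecidableEq B₀] [DecidableEq B₁]

theorem wd_N (N : Matrix (A₀ × B₀) (A₀ × B₀) ℂ)
    (Y : Matrix (A₀ × A₁ × B₀ × B₁) (A₀ × A₁ × B₀ × B₁) ℂ) :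
    Matrix.trace (embedN N * Y) = Matrix.trace (N * trA1B1 Y) := by
  have e1 : Matrix.trace (embedN N * Y) = ∑ a, ∑ b, ∑ a', ∑ b', ∑ c, ∑ d,
      N (a, b) (a', b') * Y (a', c, b', d) (a, c, b, d) := by
    simp only [Matrix.trace, Matrix.diag, Matrix.mul_apply, embedN, Fintype.sum_prod_type,
      ite_and, mul_ite, ite_mul, mul_one, mul_zero, zero_mul]
    simp only [Finset.sum_ite_eq, Finset.sum_ite_irrel, Finset.sum_const_zero,
      Finset.mem_univ, if_true]
    refine Finset.sum_congr rfl fun a _ => ?_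
    rw [Finset.sum_comm]
    refine Finset.sum_congr rfl fun b _ => ?_
    rw [Finset.sum_comm_cycle]
    refine Finset.sum_congr rfl fun a' _ => ?_
    rw [Finset.sum_comm_cycle]
  rw [e1]
  simp only [Matrix.trace, Matrix.diag, Matrix.mul_apply, trA1B1, Fintype.sum_prod_type,
    Finset.mul_sum]

theorem wd_P (P : Matrix (A₀ × B₀ × B₁) (A₀ × B₀ × B₁) ℂ)
    (Y : Matrix (A₀ × A₁ × B₀ × B₁) (A₀ × A₁ × B₀ × B₁) ℂ) :
    Matrix.trace (embedP P * Y) = Matrix.trace (P * trA1 Y) := by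
  simp only [Matrix.trace, Matrix.diag, Matrix.mul_apply, trA1, embedP, Fintype.sum_prod_type,
    Finset.mul_sum, mul_ite, ite_mul, mul_one, mul_zero, zero_mul]
  simp only [Finset.sum_ite_eq, Finset.sum_ite_irrel, Finset.sum_const_zero,
      Finset.mem_univ, if_true]
  refine Finset.sum_congr rfl fun a _ => ?_
  rw [Finset.sum_comm]
  refine Finset.sum_congr rfl fun b _ => ?_
  rw [Finset.sum_comm]
  refine Finset.sum_congr rfl fun d _ => ?_
  rw [Finset.sum_comm]
  refine Finset.sum_congr rfl fun a' _ => ?_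
  rw [Finset.sum_comm]
  refine Finset.sum_congr rfl fun b' _ => ?_
  rw [Finset.sum_comm]

theorem wd_Q (Q : Matrix (A₀ × A₁ × B₀) (A₀ × A₁ × B₀) ℂ)
    (Y : Matrix (A₀ × A₁ × B₀ × B₁) (A₀ × A₁ × B₀ × B₁) ℂ) :
    Matrix.trace (embedQ Q * Y) = Matrix.trace (Q * trB1 Y) := by
  simp only [Matrix.trace, Matrix.diag, Matrix.mul_apply, trB1, embedQ, Fintype.sum_prod_type,
    Finset.mul_sum, mul_ite, ite_mul, mul_one, mul_zero, zero_mul]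
  simp only [Finset.sum_ite_eq, Finset.sum_ite_irrel, Finset.sum_const_zero,
      Finset.mem_univ, if_true]
  refine Finset.sum_congr rfl fun a _ => ?_
  refine Finset.sum_congr rfl fun b _ => ?_
  refine Finset.sum_congr rfl fun d _ => ?_
  rw [Finset.sum_comm]
  refine Finset.sum_congr rfl fun a' _ => ?_
  rw [Finset.sum_comm]
  refine Finset.sum_congr rfl fun b' _ => ?_
  rw [Finset.sum_comm]

theorem wd_P0 {S T : Type*} [Fintype S] [Fintype T] [DecidableEq S]
    (P : Matrix (S × T) (S × T) ℂ) (Z : Matrix T T ℂ)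
    (h : trInp P = 0) : Matrix.trace (P * piFst Z) = 0 := by
  have e : Matrix.trace (P * piFst Z) =
      (Fintype.card S : ℂ)⁻¹ * ∑ t, ∑ t', trInp P t t' * Z t' t := by
    simp only [Matrix.trace, Matrix.diag, Matrix.mul_apply, piFst, trInp, Fintype.sum_prod_type,
      Finset.mul_sum, Finset.sum_mul, mul_ite, ite_mul, mul_one, mul_zero, zero_mul]
    simp only [Finset.sum_ite_eq', Finset.sum_ite_irrel, Finset.sum_const_zero,
      Finset.mem_univ, if_true]
    rw [Finset.sum_comm]
    refine Finset.sum_congr rfl fun t _ => ?_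
    rw [Finset.sum_comm]
    refine Finset.sum_congr rfl fun t' _ => ?_
    refine Finset.sum_congr rfl fun s _ => ?_
    ring
  rw [e, h]; simp

theorem wd_Q0 (Q : Matrix (A₀ × A₁ × B₀) (A₀ × A₁ × B₀) ℂ) (Z : Matrix (A₀ × A₁) (A₀ × A₁) ℂ)
    (h : trB0Last Q = 0) : Matrix.trace (Q * piB0 Z) = 0 := by
  have e : Matrix.trace (Q * piB0 Z) =
      (Fintype.card B₀ : ℂ)⁻¹ * ∑ t, ∑ t', trB0Last Q t t' * Z t' t := by
    simp only [Matrix.trace, Matrix.diag, Matrix.mul_apply, piB0, trB0Last, Fintype.sum_prod_type,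
      Finset.mul_sum, Finset.sum_mul, mul_ite, ite_mul, mul_one, mul_zero, zero_mul]
    simp only [Finset.sum_ite_eq', Finset.sum_ite_irrel, Finset.sum_const_zero,
      Finset.mem_univ, if_true]
    refine Finset.sum_congr rfl fun t _ => ?_
    refine Finset.sum_congr rfl fun t' _ => ?_
    rw [Finset.sum_comm]
    refine Finset.sum_congr rfl fun s _ => ?_
    rw [Finset.sum_comm]
    refine Finset.sum_congr rfl fun s' _ => ?_
    refine Finset.sum_congr rfl fun b _ => ?_
    ring
  rw [e, h]; simp

end WDAux

/-- Weak duality for the SDP of the max-relative entropy of bidirectional classical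
communication: any primal feasible `(λ, Y)` and dual feasible `(M, N, P, Q)` satisfy
`Re Tr(M J) ≤ λ`. -/
theorem weak_duality_dmax
    {A₀ A₁ B₀ B₁ : Type*}
    [Fintype A₀] [Fintype A₁] [Fintype B₀] [Fintype B₁]
    [DecidableEq A₀] [DecidableEq A₁] [DecidableEq B₀] [DecidableEq B₁]
    [Nonempty A₀] [Nonempty A₁] [Nonempty B₀] [Nonempty B₁]
    (J : Matrix (A₀ × A₁ × B₀ × B₁) (A₀ × A₁ × B₀ × B₁) ℂ) (hJ : J.PosSemidef)
    (l : ℝ) (Y : Matrix (A₀ × A₁ × B₀ × B₁) (A₀ × A₁ × B₀ × B₁) ℂ)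
    (hY₁ : LoewnerLE J Y)
    (hY₂ : trA1B1 Y = l • (1 : Matrix (A₀ × B₀) (A₀ × B₀) ℂ))
    (hY₃ : trA1 Y = piFst (trA0A1 Y))
    (hY₄ : trB1 Y = piB0 (trB0B1 Y))
    (M : Matrix (A₀ × A₁ × B₀ × B₁) (A₀ × A₁ × B₀ × B₁) ℂ)
    (N : Matrix (A₀ × B₀) (A₀ × B₀) ℂ)
    (P : Matrix (A₀ × B₀ × B₁) (A₀ × B₀ × B₁) ℂ)
    (Q : Matrix (A₀ × A₁ × B₀) (A₀ × A₁ × B₀) ℂ)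
    (hM : M.PosSemidef)
    (hN₁ : N.IsHermitian) (hN₂ : Matrix.trace N = 1)
    (hP₁ : P.IsHermitian) (hP₂ : trInp P = 0)
    (hQ₁ : Q.IsHermitian) (hQ₂ : trB0Last Q = 0)
    (hdual : LoewnerLE M (embedN N + embedP P + embedQ Q)) :
    (Matrix.trace (M * J)).re ≤ l := by
  have hY : Y.PosSemidef := by
    have := hJ.add hY₁
    rwa [add_sub_cancel] at this
  have h1 := wd_trace_nonneg hM hY₁
  have h2 := wd_trace_nonneg hdual hY
  have h3 : Matrix.trace ((embedN N + embedP P + embedQ Q) * Y) = (l : ℂ) := by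
    rw [Matrix.add_mul, Matrix.add_mul, Matrix.trace_add, Matrix.trace_add, wd_N, wd_P, wd_Q,
      hY₂, hY₃, hY₄, wd_P0 _ _ hP₂, wd_Q0 _ _ hQ₂, Matrix.mul_smul, Matrix.mul_one,
      Matrix.trace_smul, hN₂]
    simp
  rw [Matrix.mul_sub, Matrix.trace_sub, Complex.sub_re] at h1
  rw [Matrix.sub_mul, Matrix.trace_sub, Complex.sub_re, h3, Complex.ofReal_re] at h2
  linarith
end
end
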